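/- arXiv:1009.0216 — 9 statements merged into one kernel-verified Lean document; each statement's English description precedes it below -/
import Mathlib

section
/- Let G be a finite simple graph admitting a permutation model: injective maps π, ρ : V(G) → ℝ such that two distinct vertices u, v are adjacent in G if and only if (π(u) < π(v) and ρ(v) < ρ(u)) or (π(v) < π(u) and ρ(u) < ρ(v)). Then for every t ∈ ℝ, setting A = {v ∈ V(G) : π(v) < t}, every nonempty subset X ⊆ A contains a vertex x with N(X) ∩ (V(G) ∖ A) = N(x) ∩ (V(G) ∖ A); consequently the cut-neighbourhood family of A has at most |A| + 1 elements. (This witnesses that every n-vertex permutation graph has boolean-width at most log₂ n, via the caterpillar decomposition ordered by π.) -/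
/-- `nbhds G X` is `N(X)`, the union of the open neighbourhoods of the vertices of `X`. -/
def nbhds {V : Type*} (G : SimpleGraph V) (X : Set V) : Set V :=
  {v | ∃ x ∈ X, G.Adj x v}

/-- The cut-neighbourhood family of `A`: `{N(X) ∩ (V ∖ A) : X ⊆ A}`. -/
def cutNbhdFamily {V : Type*} (G : SimpleGraph V) (A : Set V) : Set (Set V) :=
  {S | ∃ X ⊆ A, S = nbhds G X ∩ Aᶜ}

/-! Let `A = {v | π v < t}`. A vertex `x` of `A` is adjacent to exactly those vertices `v` outside
`A` with `ρ v < ρ x`, so the cut-neighbourhoods of the vertices of `A` are nested. A finite nonempty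
union of nested sets equals its largest member, whence every nonempty `X ⊆ A` has the same
cut-neighbourhood as one of its elements; the extra `1` in the count is for `X = ∅`. -/

/-- `π` and `ρ` are the endpoint coordinates of a segment representation of `G` between two parallel
lines: adjacency is crossing. The coordinates may lie in arbitrary ordered types, and segments that
share an endpoint do not cross. -/
def IsCrossingModel {V α β : Type*} [LT α] [LT β] (G : SimpleGraph V) (π : V → α) (ρ : V → β) :
    Prop :=
  ∀ u v : V, u ≠ v → (G.Adj u v ↔ (π u < π v ∧ ρ v < ρ u) ∨ (π v < π u ∧ ρ u < ρ v))

/-- The bipartite graph between `A` and its complement is a chain graph: the neighbourhoods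
on one side are nested, which is equivalent for the two sides and is encoded on the side of `A`. -/
def IsChainCut {V : Type*} (G : SimpleGraph V) (A : Set V) : Prop :=
  IsChain (· ⊆ ·) ((fun x ↦ G.neighborSet x ∩ Aᶜ) '' A)

theorem nbhds_inter_eq_biUnion {V : Type*} (G : SimpleGraph V) (X B : Set V) :
    nbhds G X ∩ B = ⋃ x ∈ X, G.neighborSet x ∩ B := by
  ext v
  simp only [nbhds, Set.mem_inter_iff, Set.mem_ofPred_eq, Set.mem_iUnion₂,
    SimpleGraph.mem_neighborSet, exists_prop, ← and_assoc, exists_and_right]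

section

variable {V : Type*} {G : SimpleGraph V} {A X : Set V}

theorem IsChainCut.exists_nbhds_inter_compl_eq (hA : IsChainCut G A) (hXA : X ⊆ A)
    (hX : X.Finite) (hne : X.Nonempty) :
    ∃ x ∈ X, nbhds G X ∩ Aᶜ = G.neighborSet x ∩ Aᶜ := by
  obtain ⟨x, hx, hmax⟩ := hX.exists_maximalFor (fun x ↦ G.neighborSet x ∩ Aᶜ) X hne
  refine ⟨x, hx, ?_⟩
  rw [nbhds_inter_eq_biUnion]
  refine Set.Subset.antisymm (Set.iUnion₂_subset fun y hy ↦ ?_)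
    (Set.subset_biUnion_of_mem (u := fun y ↦ G.neighborSet y ∩ Aᶜ) hx)
  exact (hA.total (Set.mem_image_of_mem _ (hXA hy)) (Set.mem_image_of_mem _ (hXA hx))).elim
    id (hmax hy)

theorem IsChainCut.cutNbhdFamily_subset (hA : IsChainCut G A) (hfin : A.Finite) :
    cutNbhdFamily G A ⊆ insert ∅ ((fun x ↦ G.neighborSet x ∩ Aᶜ) '' A) := by
  rintro _ ⟨X, hXA, rfl⟩
  rcases X.eq_empty_or_nonempty with rfl | hne
  · left
    rw [nbhds_inter_eq_biUnion, Set.biUnion_empty]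
  · obtain ⟨x, hx, hnbhds⟩ := hA.exists_nbhds_inter_compl_eq hXA (hfin.subset hXA) hne
    exact Or.inr ⟨x, hXA hx, hnbhds.symm⟩

theorem IsChainCut.ncard_cutNbhdFamily_le (hA : IsChainCut G A) (hfin : A.Finite) :
    (cutNbhdFamily G A).ncard ≤ A.ncard + 1 :=
  calc (cutNbhdFamily G A).ncard
      ≤ (insert ∅ ((fun x ↦ G.neighborSet x ∩ Aᶜ) '' A)).ncard :=
        Set.ncard_le_ncard (hA.cutNbhdFamily_subset hfin) ((hfin.image _).insert _)
    _ ≤ ((fun x ↦ G.neighborSet x ∩ Aᶜ) '' A).ncard + 1 := Set.ncard_insert_le _ _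
    _ ≤ A.ncard + 1 := Nat.add_le_add_right (Set.ncard_image_le hfin) 1

theorem IsChainCut.of_adj_iff_lt {β : Type*} [LinearOrder β] {ρ : V → β}
    (hadj : ∀ x ∈ A, ∀ v ∉ A, (G.Adj x v ↔ ρ v < ρ x)) : IsChainCut G A := by
  have nbhd_mono {x y : V} (hx : x ∈ A) (hy : y ∈ A) (hxy : ρ x ≤ ρ y) :
      G.neighborSet x ∩ Aᶜ ⊆ G.neighborSet y ∩ Aᶜ := fun v ⟨hxv, hv⟩ ↦
    ⟨(hadj y hy v hv).2 (((hadj x hx v hv).1 hxv).trans_le hxy), hv⟩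
  rintro _ ⟨x, hx, rfl⟩ _ ⟨y, hy, rfl⟩ -
  exact (le_total (ρ x) (ρ y)).imp (nbhd_mono hx hy) (nbhd_mono hy hx)

theorem IsCrossingModel.adj_iff_of_lt {α β : Type*} [Preorder α] [LT β] {π : V → α} {ρ : V → β}
    (h : IsCrossingModel G π ρ) {u v : V} (huv : π u < π v) : G.Adj u v ↔ ρ v < ρ u := by
  rw [h u v (ne_of_apply_ne π huv.ne)]
  simp only [huv, huv.not_gt, true_and, false_and, or_false]

variable {α β : Type*} [LinearOrder α] [LinearOrder β] {π : V → α} {ρ : V → β}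

theorem IsCrossingModel.isChainCut (h : IsCrossingModel G π ρ) (t : α) :
    IsChainCut G {v | π v < t} :=
  .of_adj_iff_lt fun _ hx _ hv ↦ h.adj_iff_of_lt (lt_of_lt_of_le hx (not_lt.1 hv))

theorem permutation_graph_cut_nbhds_general (hmodel : IsCrossingModel G π ρ) (t : α)
    (hA : A = {v | π v < t}) (hfin : A.Finite) :
    (∀ X : Set V, X ⊆ A → X.Nonempty →
        ∃ x ∈ X, nbhds G X ∩ Aᶜ = G.neighborSet x ∩ Aᶜ) ∧
      (cutNbhdFamily G A).ncard ≤ A.ncard + 1 := by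
  have hchain : IsChainCut G A := hA ▸ hmodel.isChainCut t
  exact ⟨fun X hXA ↦ hchain.exists_nbhds_inter_compl_eq hXA (hfin.subset hXA),
    hchain.ncard_cutNbhdFamily_le hfin⟩

end

theorem permutation_graph_cut_nbhds {V : Type*} [Fintype V] (G : SimpleGraph V)
    (π ρ : V → ℝ) (hπ : Function.Injective π) (hρ : Function.Injective ρ)
    (hmodel : ∀ u v : V, u ≠ v →
      (G.Adj u v ↔ (π u < π v ∧ ρ v < ρ u) ∨ (π v < π u ∧ ρ u < ρ v)))
    (t : ℝ) (A : Set V) (hA : A = {v | π v < t}) :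
    (∀ X : Set V, X ⊆ A → X.Nonempty →
        ∃ x ∈ X, nbhds G X ∩ Aᶜ = G.neighborSet x ∩ Aᶜ) ∧
      (cutNbhdFamily G A).ncard ≤ A.ncard + 1 :=
  permutation_graph_cut_nbhds_general hmodel t hA A.toFinite
end

section
/- Let G be a finite simple graph with nonempty vertex set admitting an interval model: maps l, r : V(G) → ℝ with l(v) ≤ r(v) for all v, such that two distinct vertices u, v are adjacent if and only if l(u) ≤ r(v) and l(v) ≤ r(u). Then for every t ∈ ℝ, setting A = {v ∈ V(G) : l(v) < t}: (i) every nonempty subset X ⊆ A contains a vertex x with N(X) ∩ (V(G) ∖ A) = N(x) ∩ (V(G) ∖ A); and (ii) the cut-neighbourhood family of A has at most ω(G) elements, where ω(G) is the clique number of G. (This witnesses that every interval graph has boolean-width at most log₂ of its clique number.) -/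
/-- The inner vertex boundary of `A`: the vertices of `A` with a neighbour outside `A`. In an
interval graph cut along left endpoints, their neighbourhoods outside `A` are all the members of the
cut-neighbourhood family other than `∅`. -/
def cutBoundary {V : Type*} (G : SimpleGraph V) (A : Set V) : Set V :=
  {x ∈ A | ∃ w ∉ A, G.Adj x w}

/-- The closed intervals `[l v, r v]` in an ordered type represent `G`: they are nonempty, and
distinct vertices are adjacent iff their intervals overlap. Overlap is expressed by comparing
endpoints, which in a linear order means that the intervals share a point. -/
structure IsIntervalModel {V α : Type*} [LE α] (G : SimpleGraph V) (l r : V → α) : Prop where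
  left_le_right : ∀ v, l v ≤ r v
  adj_iff : ∀ u v, u ≠ v → (G.Adj u v ↔ l u ≤ r v ∧ l v ≤ r u)

section CutNeighbourhoods

variable {V : Type*} {G : SimpleGraph V} {A : Set V}

theorem nbhds_eq_biUnion (G : SimpleGraph V) (X : Set V) :
    nbhds G X = ⋃ x ∈ X, G.neighborSet x := by
  ext v
  simp [nbhds]

theorem nbhds_inter_eq_neighborSet_inter {X S : Set V} {x : V} (hx : x ∈ X)
    (hmax : ∀ y ∈ X, G.neighborSet y ∩ S ⊆ G.neighborSet x ∩ S) :
    nbhds G X ∩ S = G.neighborSet x ∩ S := by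
  rw [nbhds_eq_biUnion, Set.iUnion₂_inter]
  exact (Set.iUnion₂_subset hmax).antisymm
    (Set.subset_biUnion_of_mem (u := fun y => G.neighborSet y ∩ S) hx)

theorem neighborSet_inter_compl_eq_empty {x : V} (hx : x ∈ A) (hxB : x ∉ cutBoundary G A) :
    G.neighborSet x ∩ Aᶜ = ∅ :=
  Set.eq_empty_of_forall_notMem fun w hw => hxB ⟨hx, w, hw.2, hw.1⟩

theorem cutNbhdFamily_subset_insert_image
    (hA : ∀ X ⊆ A, X.Nonempty → ∃ x ∈ X, nbhds G X ∩ Aᶜ = G.neighborSet x ∩ Aᶜ) :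
    cutNbhdFamily G A ⊆ insert ∅ ((fun x => G.neighborSet x ∩ Aᶜ) '' cutBoundary G A) := by
  rintro _ ⟨X, hXA, rfl⟩
  obtain rfl | hX := X.eq_empty_or_nonempty
  · simp [nbhds_eq_biUnion]
  obtain ⟨x, hxX, hx⟩ := hA X hXA hX
  rw [hx]
  by_cases hxB : x ∈ cutBoundary G A
  · exact .inr ⟨x, hxB, rfl⟩
  · exact .inl (neighborSet_inter_compl_eq_empty (hXA hxX) hxB)

theorem encard_cutNbhdFamily_le
    (hA : ∀ X ⊆ A, X.Nonempty → ∃ x ∈ X, nbhds G X ∩ Aᶜ = G.neighborSet x ∩ Aᶜ) :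
    (cutNbhdFamily G A).encard ≤ (cutBoundary G A).encard + 1 :=
  calc (cutNbhdFamily G A).encard
      ≤ (insert ∅ ((fun x => G.neighborSet x ∩ Aᶜ) '' cutBoundary G A)).encard :=
        Set.encard_le_encard (cutNbhdFamily_subset_insert_image hA)
    _ ≤ ((fun x => G.neighborSet x ∩ Aᶜ) '' cutBoundary G A).encard + 1 :=
        Set.encard_insert_le _ _
    _ ≤ (cutBoundary G A).encard + 1 := by
        gcongr
        exact Set.encard_image_le _ _

end CutNeighbourhoods

theorem encard_le_cliqueNum_of_isClique {V : Type*} {G : SimpleGraph V} {n : ℕ}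
    (hG : G.CliqueFree n) {C : Set V} (hC : G.IsClique C) : C.encard ≤ G.cliqueNum := by
  have hbdd : BddAbove {m | ∃ s, G.IsNClique m s} :=
    ⟨n, fun m ⟨s, hs⟩ => le_of_not_ge fun hnm => hG.mono hnm s hs⟩
  by_contra! hlt
  obtain ⟨T, hTC, hT⟩ := Set.exists_subset_encard_eq (Order.add_one_le_of_lt hlt)
  lift T to Finset V using Set.finite_of_encard_eq_coe (k := G.cliqueNum + 1) (mod_cast hT)
  have hcard : T.card = G.cliqueNum + 1 := by
    rw [Set.encard_coe_eq_coe_finsetCard] at hT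
    exact_mod_cast hT
  have hle : G.cliqueNum + 1 ≤ G.cliqueNum := le_csSup hbdd ⟨T, hC.subset hTC, hcard⟩
  omega

namespace IsIntervalModel

variable {V α : Type*} {G : SimpleGraph V} {l r : V → α} {A : Set V}

section Preorder

variable [Preorder α]

theorem adj_iff_of_mem_of_notMem (h : IsIntervalModel G l r) (hA : ∀ a ∈ A, ∀ b ∉ A, l a ≤ l b)
    {x w : V} (hx : x ∈ A) (hw : w ∉ A) : G.Adj x w ↔ l w ≤ r x := by
  rw [h.adj_iff x w (ne_of_mem_of_not_mem hx hw)]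
  exact and_iff_right ((hA x hx w hw).trans (h.left_le_right w))

theorem neighborSet_inter_compl_subset (h : IsIntervalModel G l r)
    (hA : ∀ a ∈ A, ∀ b ∉ A, l a ≤ l b) {x y : V} (hx : x ∈ A) (hy : y ∈ A) (hxy : r x ≤ r y) :
    G.neighborSet x ∩ Aᶜ ⊆ G.neighborSet y ∩ Aᶜ := by
  rintro w ⟨hxw, hw⟩
  have hwx : l w ≤ r x := (h.adj_iff_of_mem_of_notMem hA hx hw).1 hxw
  exact ⟨(h.adj_iff_of_mem_of_notMem hA hy hw).2 (hwx.trans hxy), hw⟩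

theorem isClique_cutBoundary (h : IsIntervalModel G l r) (hA : ∀ a ∈ A, ∀ b ∉ A, l a ≤ l b) :
    G.IsClique (cutBoundary G A) := by
  have left_le_right_of_mem : ∀ x ∈ A, ∀ y ∈ cutBoundary G A, l x ≤ r y := by
    rintro x hx y ⟨hy, w, hw, hyw⟩
    exact (hA x hx w hw).trans ((h.adj_iff_of_mem_of_notMem hA hy hw).1 hyw)
  intro x hx y hy hxy
  exact (h.adj_iff x y hxy).2
    ⟨left_le_right_of_mem x hx.1 y hy, left_le_right_of_mem y hy.1 x hx⟩

end Preorder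

section LinearOrder

variable [LinearOrder α]

theorem exists_nbhds_inter_compl_eq (h : IsIntervalModel G l r)
    (hA : ∀ a ∈ A, ∀ b ∉ A, l a ≤ l b) (hB : (cutBoundary G A).Finite) {X : Set V}
    (hXA : X ⊆ A) (hX : X.Nonempty) :
    ∃ x ∈ X, nbhds G X ∩ Aᶜ = G.neighborSet x ∩ Aᶜ := by
  suffices hmax : ∃ x ∈ X, ∀ y ∈ X ∩ cutBoundary G A,
      G.neighborSet y ∩ Aᶜ ⊆ G.neighborSet x ∩ Aᶜ by
    obtain ⟨x, hx, hmax⟩ := hmax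
    refine ⟨x, hx, nbhds_inter_eq_neighborSet_inter hx fun y hy => ?_⟩
    by_cases hyB : y ∈ cutBoundary G A
    · exact hmax y ⟨hy, hyB⟩
    · simp [neighborSet_inter_compl_eq_empty (hXA hy) hyB]
  obtain hempty | hne := (X ∩ cutBoundary G A).eq_empty_or_nonempty
  · obtain ⟨x, hx⟩ := hX
    exact ⟨x, hx, by simp [hempty]⟩
  · obtain ⟨x, hx, hmax⟩ := Set.exists_max_image _ r (hB.inter_of_right X) hne
    exact ⟨x, hx.1, fun y hy =>
      h.neighborSet_inter_compl_subset hA (hXA hy.1) (hXA hx.1) (hmax y hy)⟩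

theorem exists_isClique_insert_cutBoundary [Nonempty V] (h : IsIntervalModel G l r)
    (hA : ∀ a ∈ A, ∀ b ∉ A, l a ≤ l b) (hB : (cutBoundary G A).Finite) :
    ∃ v ∉ cutBoundary G A, G.IsClique (insert v (cutBoundary G A)) := by
  obtain hempty | hne := (cutBoundary G A).eq_empty_or_nonempty
  · simp [hempty]
  obtain ⟨x, ⟨hx, w, hw, hxw⟩, hmin⟩ := Set.exists_min_image _ r hB hne
  refine ⟨w, fun hwB => hw hwB.1, (h.isClique_cutBoundary hA).insert fun y hy _ => ?_⟩
  exact (h.neighborSet_inter_compl_subset hA hx hy.1 (hmin y hy) ⟨hxw, hw⟩).1.symm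

end LinearOrder

end IsIntervalModel

theorem interval_graph_cut_nbhds_general {V α : Type*} [Nonempty V] [LinearOrder α]
    {G : SimpleGraph V} {n : ℕ} (hG : G.CliqueFree n) {l r : V → α} (h : IsIntervalModel G l r)
    {A : Set V} (hA : ∀ a ∈ A, ∀ b ∉ A, l a ≤ l b) :
    (∀ X ⊆ A, X.Nonempty → ∃ x ∈ X, nbhds G X ∩ Aᶜ = G.neighborSet x ∩ Aᶜ) ∧
      (cutNbhdFamily G A).encard ≤ G.cliqueNum := by
  have hB : (cutBoundary G A).Finite := Set.finite_of_encard_le_coe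
    (encard_le_cliqueNum_of_isClique hG (h.isClique_cutBoundary hA))
  have hrep : ∀ X ⊆ A, X.Nonempty → ∃ x ∈ X, nbhds G X ∩ Aᶜ = G.neighborSet x ∩ Aᶜ :=
    fun _ => h.exists_nbhds_inter_compl_eq hA hB
  refine ⟨hrep, ?_⟩
  obtain ⟨v, hv, hclique⟩ := h.exists_isClique_insert_cutBoundary hA hB
  calc (cutNbhdFamily G A).encard
      ≤ (cutBoundary G A).encard + 1 := encard_cutNbhdFamily_le hrep
    _ = (insert v (cutBoundary G A)).encard := (Set.encard_insert_of_notMem hv).symm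
    _ ≤ G.cliqueNum := encard_le_cliqueNum_of_isClique hG hclique

theorem interval_graph_cut_nbhds {V : Type*} [Fintype V] [Nonempty V] (G : SimpleGraph V)
    (l r : V → ℝ) (hlr : ∀ v, l v ≤ r v)
    (hmodel : ∀ u v : V, u ≠ v → (G.Adj u v ↔ l u ≤ r v ∧ l v ≤ r u))
    (t : ℝ) (A : Set V) (hA : A = {v | l v < t}) :
    (∀ X : Set V, X ⊆ A → X.Nonempty →
        ∃ x ∈ X, nbhds G X ∩ Aᶜ = G.neighborSet x ∩ Aᶜ) ∧
      (cutNbhdFamily G A).ncard ≤ G.cliqueNum := by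
  have hcut : ∀ a ∈ A, ∀ b ∉ A, l a ≤ l b := by
    subst hA
    exact fun a ha b hb => ha.le.trans (not_lt.1 hb)
  have hG : G.CliqueFree (Fintype.card V + 1) := G.cliqueFree_of_card_lt (Nat.lt_succ_self _)
  exact (interval_graph_cut_nbhds_general hG ⟨hlr, hmodel⟩ hcut).imp_right
    fun hle => (Set.encard_le_coe_iff_finite_ncard_le.1 hle).2
end

section
/- Let G be a finite simple graph admitting a trapezoid model: maps tl, tr, bl, br : V(G) → ℝ with tl(v) ≤ tr(v) and bl(v) ≤ br(v) for all v, such that two distinct vertices u, v are adjacent if and only if neither (tr(u) < tl(v) and br(u) < bl(v)) nor (tr(v) < tl(u) and br(v) < bl(u)) holds. Then for every t ∈ ℝ, setting A = {v ∈ V(G) : tr(v) < t}, every nonempty subset S ⊆ A has a subset S' ⊆ S with |S'| ≤ 2 and N(S) ∩ (V(G) ∖ A) = N(S') ∩ (V(G) ∖ A); consequently the cut-neighbourhood family of A has at most 1 + |A| + |A|(|A|−1)/2 elements. (This witnesses that every n-vertex trapezoid graph has boolean-width at most 2 log₂ n.) -/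
/-!
A vertex `v` outside `A` never lies to the left of a vertex `u` of `A`, so `u` and `v` are
adjacent exactly when `v` starts no later than `u` ends on at least one line. Hence, for each
line, the vertex of `S ⊆ A` reaching furthest to the right on it meets every outside vertex that
`S` meets because of that line, and one such vertex per line already has the same
cut-neighbourhood as `S`. So every member of the cut-neighbourhood family comes from a subset of
`A` with at most as many elements as there are lines.
-/

/-- The object `u` lies entirely to the left of `v` on every line `i : ι` of a drawing between
parallel lines in which `v` occupies the interval `[l i v, r i v]` of line `i`. The lines may carry
different linear orders, and intervals may be empty. -/
def LeftOf {V ι : Type*} {α : ι → Type*} [∀ i, LT (α i)] (l r : ∀ i, V → α i) (u v : V) : Prop :=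
  ∀ i, r i u < l i v

/-- A trapezoid model of `G` on the parallel lines `ι`: distinct vertices are adjacent exactly when
neither lies to the left of the other. Two lines give the usual trapezoid graphs. -/
def IsTrapezoidModel {V ι : Type*} {α : ι → Type*} [∀ i, LT (α i)] (G : SimpleGraph V)
    (l r : ∀ i, V → α i) : Prop :=
  ∀ u v, u ≠ v → (G.Adj u v ↔ ¬LeftOf l r u v ∧ ¬LeftOf l r v u)

section Counting

variable {V β : Type*} {A : Set V}

theorem ncard_setOf_subset_ncard_le (hA : A.Finite) (k : ℕ) :
    {X | X ⊆ A ∧ X.ncard ≤ k}.ncard = ∑ i ∈ Finset.range (k + 1), A.ncard.choose i := by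
  classical
  lift A to Finset V using hA
  have coe_slices : {X : Set V | X ⊆ A ∧ X.ncard ≤ k} =
      (↑) '' (((Finset.range (k + 1)).biUnion A.powersetCard : Finset (Finset V)) :
        Set (Finset V)) := by
    ext X
    constructor
    · rintro ⟨hXA, hXk⟩
      lift X to Finset V using A.finite_toSet.subset hXA
      exact ⟨X, by simpa [and_comm] using And.intro hXA hXk, rfl⟩
    · rintro ⟨X, hX, rfl⟩
      simpa [and_comm] using hX
  rw [coe_slices, Set.ncard_image_of_injective _ Finset.coe_injective, Set.ncard_coe_finset,
    Finset.card_biUnion (A.pairwise_disjoint_powersetCard.set_pairwise _)]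
  simp only [Finset.card_powersetCard, Set.ncard_coe_finset]

theorem ncard_image_powerset_le_sum_choose (hA : A.Finite) {k : ℕ} {f : Set V → β}
    (hf : ∀ X ⊆ A, ∃ Y ⊆ X, Y.ncard ≤ k ∧ f X = f Y) :
    (f '' 𝒫 A).ncard ≤ ∑ i ∈ Finset.range (k + 1), A.ncard.choose i := by
  have small_finite : {X | X ⊆ A ∧ X.ncard ≤ k}.Finite := hA.finite_subsets.subset fun _ h ↦ h.1
  have image_subset : f '' 𝒫 A ⊆ f '' {X | X ⊆ A ∧ X.ncard ≤ k} := by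
    rintro _ ⟨X, hXA, rfl⟩
    obtain ⟨Y, hYX, hYk, hfY⟩ := hf X hXA
    exact ⟨Y, ⟨hYX.trans hXA, hYk⟩, hfY.symm⟩
  calc (f '' 𝒫 A).ncard ≤ (f '' {X | X ⊆ A ∧ X.ncard ≤ k}).ncard :=
        Set.ncard_le_ncard image_subset (small_finite.image f)
    _ ≤ {X | X ⊆ A ∧ X.ncard ≤ k}.ncard := Set.ncard_image_le small_finite
    _ = ∑ i ∈ Finset.range (k + 1), A.ncard.choose i := ncard_setOf_subset_ncard_le hA k

end Counting

section Neighbourhoods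

variable {V : Type*} (G : SimpleGraph V)

theorem nbhds_mono {X Y : Set V} (h : X ⊆ Y) : nbhds G X ⊆ nbhds G Y :=
  fun _ ⟨x, hx, hadj⟩ ↦ ⟨x, h hx, hadj⟩

theorem cutNbhdFamily_eq_image (A : Set V) :
    cutNbhdFamily G A = (fun X ↦ nbhds G X ∩ Aᶜ) '' 𝒫 A := by
  ext S
  simp only [cutNbhdFamily, Set.mem_image, Set.mem_powerset_iff, Set.mem_ofPred_eq, eq_comm]

end Neighbourhoods

theorem not_leftOf_of_lt_of_not_lt {V ι : Type*} {α : ι → Type*} [∀ i, Preorder (α i)]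
    {l r : ∀ i, V → α i} {i : ι} {t : α i} {u v : V} (hlr : l i u ≤ r i u) (hu : r i u < t)
    (hv : ¬r i v < t) : ¬LeftOf l r v u :=
  fun hvu ↦ hv (((hvu i).trans_le hlr).trans hu)

theorem isTrapezoidModel_fin_two {V α : Type*} [LT α] {G : SimpleGraph V} {tl tr bl br : V → α} :
    IsTrapezoidModel G ![tl, bl] ![tr, br] ↔ ∀ u v, u ≠ v →
      (G.Adj u v ↔ ¬(tr u < tl v ∧ br u < bl v) ∧ ¬(tr v < tl u ∧ br v < bl u)) := by
  simp [IsTrapezoidModel, LeftOf, Fin.forall_fin_two]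

section TrapezoidModel

variable {V ι : Type*} {α : ι → Type*} [∀ i, LinearOrder (α i)]

theorem exists_subset_ncard_le_card_forall_exists_le [Finite ι] {S : Set V} (hS : S.Finite)
    (r : ∀ i, V → α i) :
    ∃ T ⊆ S, T.ncard ≤ Nat.card ι ∧ ∀ x ∈ S, ∀ i, ∃ y ∈ T, r i x ≤ r i y := by
  obtain rfl | hne := S.eq_empty_or_nonempty
  · exact ⟨∅, subset_rfl, by simp, by simp⟩
  choose m hmS hmax using fun i ↦ Set.exists_max_image S (r i) hS hne
  exact ⟨Set.range m, Set.range_subset_iff.2 hmS, Finite.card_range_le m,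
    fun x hx i ↦ ⟨m i, Set.mem_range_self i, hmax i x hx⟩⟩

theorem IsTrapezoidModel.adj_iff_exists_le {G : SimpleGraph V} {l r : ∀ i, V → α i}
    (hG : IsTrapezoidModel G l r) {u v : V} (hne : u ≠ v) (hvu : ¬LeftOf l r v u) :
    G.Adj u v ↔ ∃ i, l i v ≤ r i u := by
  rw [hG u v hne, and_iff_left hvu]
  simp only [LeftOf, not_forall, not_lt]

theorem IsTrapezoidModel.exists_subset_nbhds_inter_compl_eq [Finite ι] {G : SimpleGraph V}
    {l r : ∀ i, V → α i} (hG : IsTrapezoidModel G l r) {A : Set V}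
    (hA : ∀ u ∈ A, ∀ v ∉ A, ¬LeftOf l r v u) {S : Set V} (hSA : S ⊆ A) (hS : S.Finite) :
    ∃ T ⊆ S, T.ncard ≤ Nat.card ι ∧ nbhds G S ∩ Aᶜ = nbhds G T ∩ Aᶜ := by
  obtain ⟨T, hTS, hT, hdom⟩ := exists_subset_ncard_le_card_forall_exists_le hS r
  have adj_iff : ∀ u ∈ A, ∀ v ∉ A, (G.Adj u v ↔ ∃ i, l i v ≤ r i u) := fun u hu v hv ↦
    hG.adj_iff_exists_le (ne_of_mem_of_not_mem hu hv) (hA u hu v hv)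
  refine ⟨T, hTS, hT, Set.Subset.antisymm ?_ (Set.inter_subset_inter_left _ (nbhds_mono G hTS))⟩
  rintro v ⟨⟨x, hx, hxv⟩, hv⟩
  obtain ⟨i, hi⟩ := (adj_iff x (hSA hx) v hv).1 hxv
  obtain ⟨y, hy, hxy⟩ := hdom x hx i
  exact ⟨⟨y, hy, (adj_iff y (hSA (hTS hy)) v hv).2 ⟨i, hi.trans hxy⟩⟩, hv⟩

end TrapezoidModel

theorem trapezoid_graph_cut_nbhds_general {V ι : Type*} [Finite ι] {α : ι → Type*}
    [∀ i, LinearOrder (α i)] {G : SimpleGraph V} {l r : ∀ i, V → α i}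
    (hG : IsTrapezoidModel G l r) {A : Set V} (hfin : A.Finite)
    (hA : ∀ u ∈ A, ∀ v ∉ A, ¬LeftOf l r v u) :
    (∀ S ⊆ A, ∃ T ⊆ S, T.ncard ≤ Nat.card ι ∧ nbhds G S ∩ Aᶜ = nbhds G T ∩ Aᶜ) ∧
      (cutNbhdFamily G A).ncard ≤
        ∑ k ∈ Finset.range (Nat.card ι + 1), A.ncard.choose k := by
  have small : ∀ S ⊆ A, ∃ T ⊆ S, T.ncard ≤ Nat.card ι ∧ nbhds G S ∩ Aᶜ = nbhds G T ∩ Aᶜ :=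
    fun S hSA ↦ hG.exists_subset_nbhds_inter_compl_eq hA hSA (hfin.subset hSA)
  rw [cutNbhdFamily_eq_image]
  exact ⟨small, ncard_image_powerset_le_sum_choose hfin small⟩

theorem trapezoid_graph_cut_nbhds {V : Type*} [Fintype V] (G : SimpleGraph V)
    (tl tr bl br : V → ℝ) (htop : ∀ v, tl v ≤ tr v) (hbot : ∀ v, bl v ≤ br v)
    (hmodel : ∀ u v : V, u ≠ v →
      (G.Adj u v ↔ ¬(tr u < tl v ∧ br u < bl v) ∧ ¬(tr v < tl u ∧ br v < bl u)))
    (t : ℝ) (A : Set V) (hA : A = {v | tr v < t}) :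
    (∀ S : Set V, S ⊆ A → S.Nonempty →
        ∃ S' ⊆ S, S'.ncard ≤ 2 ∧ nbhds G S ∩ Aᶜ = nbhds G S' ∩ Aᶜ) ∧
      (cutNbhdFamily G A).ncard ≤ 1 + A.ncard + A.ncard * (A.ncard - 1) / 2 := by
  subst hA
  have ⟨hsmall, hcard⟩ := trapezoid_graph_cut_nbhds_general (isTrapezoidModel_fin_two.2 hmodel)
    (Set.toFinite {v | tr v < t}) fun u hu v hv ↦ not_leftOf_of_lt_of_not_lt (i := 0) (htop u) hu hv
  exact ⟨fun S hS _ ↦ by simpa using hsmall S hS,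
    by simpa [Finset.sum_range_succ, Nat.choose_two_right] using hcard⟩
end

section
/- Let G be a finite simple graph with nonempty vertex set admitting a circular arc model: maps s, e : V(G) → [0, 1), where the arc of v is the image in ℝ/ℤ of the real interval [s(v), ẽ(v)] with ẽ(v) = e(v) if s(v) ≤ e(v) and ẽ(v) = e(v) + 1 otherwise, and two distinct vertices u, v are adjacent if and only if the arcs of u and v have a common point in ℝ/ℤ. Then for every t ∈ [0, 1), setting A = {v ∈ V(G) : s(v) < t}: (i) every nonempty subset S ⊆ A has a subset S' ⊆ S with |S'| ≤ 2 and N(S) ∩ (V(G) ∖ A) = N(S') ∩ (V(G) ∖ A); and (ii) the cut-neighbourhood family of A has at most 4·ω(G)² elements, where ω(G) is the clique number of G. (This witnesses that every circular arc graph has boolean-width at most 2 log₂ ω(G) + 2.) -/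
/-- The circular arc of a vertex: the image in `ℝ/ℤ` of the interval from `s v` to
`e v` (clockwise, wrapping around `0` when `s v > e v`). -/
noncomputable def circArc {V : Type*} (s e : V → ℝ) (v : V) : Set (AddCircle (1 : ℝ)) :=
  (fun x : ℝ => (x : AddCircle (1 : ℝ))) ''
    Set.Icc (s v) (if s v ≤ e v then e v else e v + 1)

/-!
Cut the circle at `0` and at `t`. If `u ∈ A` and `v ∉ A`, then `s u < t ≤ s v`, so the two arcs meet
exactly when the arc of `u` reaches forward to `s v` or the arc of `v` wraps around to `s u`. Hence
`N(u) ∖ A` is the union of a forward part, which grows with the end of `u`, and a backward part,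
which shrinks as the start of `u` grows. Both kinds of parts form chains, so two vertices of `S`,
one for each chain, already dominate `N(S) ∖ A`. A forward part is nonempty only if the arc of `u`
contains `t`, and backward parts consist of vertices whose arc contains `0`. The arcs through a
fixed point form a clique, so each chain has at most `ω` nonempty members.
-/

section Chains

variable {ι α : Type*}

theorem exists_mem_biSup_eq_of_directedOn [CompleteLattice α] {f : ι → α} {S : Set ι}
    (hS : S.Nonempty) (hfin : (f '' S).Finite) (hdir : DirectedOn (· ≤ ·) (f '' S)) :
    ∃ a ∈ S, ⨆ u ∈ S, f u = f a := by
  obtain ⟨_, ⟨a, haS, rfl⟩, ha⟩ :=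
    (le_sSup_iff_of_directedOn (hS.image f) hfin hdir).1 le_rfl
  exact ⟨a, haS, (sSup_image.symm.trans_le ha).antisymm (le_biSup f haS)⟩

theorem biSup_mem_insert_bot_of_isChain [CompleteLattice α] {f : ι → α} {A X : Set ι}
    (hfin : (f '' A).Finite) (hchain : IsChain (· ≤ ·) (f '' A)) (hXA : X ⊆ A) :
    ⨆ u ∈ X, f u ∈ insert ⊥ (f '' A) := by
  have hsub : f '' X ⊆ f '' A := Set.image_mono hXA
  obtain rfl | hX := X.eq_empty_or_nonempty
  · simp
  · obtain ⟨a, haX, ha⟩ :=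
      exists_mem_biSup_eq_of_directedOn hX (hfin.subset hsub) (hchain.mono hsub).directedOn
    exact Or.inr ⟨a, hXA haX, ha.symm⟩

theorem exists_subset_encard_le_two_biSup_sup_eq [CompleteLattice α] {f g : ι → α} {S : Set ι}
    (hS : S.Nonempty) (hf : (f '' S).Finite) (hfdir : DirectedOn (· ≤ ·) (f '' S))
    (hg : (g '' S).Finite) (hgdir : DirectedOn (· ≤ ·) (g '' S)) :
    ∃ S' ⊆ S, S'.encard ≤ 2 ∧ ⨆ u ∈ S, (f u ⊔ g u) = ⨆ u ∈ S', (f u ⊔ g u) := by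
  obtain ⟨a, haS, ha⟩ := exists_mem_biSup_eq_of_directedOn hS hf hfdir
  obtain ⟨b, hbS, hb⟩ := exists_mem_biSup_eq_of_directedOn hS hg hgdir
  have hpair : {a, b} ⊆ S := Set.pair_subset haS hbS
  have hcard : ({a, b} : Set ι).encard ≤ 2 :=
    (Set.encard_insert_le {b} a).trans_eq (by rw [Set.encard_singleton, one_add_one_eq_two])
  refine ⟨{a, b}, hpair, hcard, le_antisymm ?_ (biSup_mono hpair)⟩
  calc ⨆ u ∈ S, (f u ⊔ g u) = f a ⊔ g b := by simp only [iSup_sup_eq, ha, hb]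
    _ ≤ (f a ⊔ g a) ⊔ (f b ⊔ g b) := sup_le_sup le_sup_left le_sup_right
    _ = ⨆ u ∈ ({a, b} : Set ι), (f u ⊔ g u) := by rw [iSup_pair]

theorem encard_le_encard_add_one_of_isChain {F : Set (Set α)} {C : Set α}
    (hchain : IsChain (· ⊆ ·) F) (hFC : ∀ S ∈ F, S ⊆ C) : F.encard ≤ C.encard + 1 := by
  obtain hC | hC := C.finite_or_infinite
  · have hmaps : Set.MapsTo Set.ncard F (Set.Iic C.ncard) :=
      fun S hS ↦ Set.ncard_le_ncard (hFC S hS) hC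
    have hinj : Set.InjOn Set.ncard F := by
      intro S hS T hT hST
      obtain h | h := hchain.total hS hT
      · exact Set.eq_of_subset_of_ncard_le h hST.ge (hC.subset (hFC T hT))
      · exact (Set.eq_of_subset_of_ncard_le h hST.le (hC.subset (hFC S hS))).symm
    calc F.encard ≤ (Set.Iic C.ncard).encard := Set.encard_le_encard_of_injOn hmaps hinj
      _ = C.ncard + 1 := by simp [Set.encard_eq_coe_toFinset_card]
      _ = C.encard + 1 := by rw [hC.cast_ncard_eq]
  · simp [hC.encard_eq]

theorem encard_image2_le {β γ : Type*} (f : α → β → γ) (S : Set α) (T : Set β) :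
    (Set.image2 f S T).encard ≤ S.encard * T.encard := by
  rw [← Set.image_prod, ← Set.encard_prod]
  exact Set.encard_image_le _ _

end Chains

section CliqueNumber

variable {V : Type*} {G : SimpleGraph V}

theorem encard_le_of_isClique_of_cliqueFree_add_one {C : Set V} {n : ℕ} (hC : G.IsClique C)
    (hG : G.CliqueFree (n + 1)) : C.encard ≤ n := by
  by_contra! hn
  obtain ⟨T, hTC, hT⟩ := Set.exists_subset_encard_eq (Order.add_one_le_of_lt hn)
  lift T to Finset V using Set.finite_of_encard_eq_coe (mod_cast hT)
  rw [Set.encard_coe_eq_coe_finsetCard] at hT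
  exact hG T ⟨hC.subset hTC, mod_cast hT⟩

theorem cliqueFree_cliqueNum_add_one [Finite V] (G : SimpleGraph V) :
    G.CliqueFree (G.cliqueNum + 1) := by
  intro K hK
  have hle : K.card ≤ G.cliqueNum := SimpleGraph.IsClique.card_le_cliqueNum (tc := hK.isClique)
  rw [hK.card_eq] at hle
  exact Nat.not_succ_le_self _ hle

theorem cliqueNum_pos [Finite V] [Nonempty V] (G : SimpleGraph V) : 0 < G.cliqueNum := by
  let v : V := Classical.arbitrary V
  have hv : G.IsClique (({v} : Finset V) : Set V) := by simp
  exact SimpleGraph.IsClique.card_le_cliqueNum (tc := hv)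

end CliqueNumber

theorem coe_image_Icc_inter_nonempty_iff {𝕜 : Type*} [AddCommGroup 𝕜] [LinearOrder 𝕜]
    [IsOrderedAddMonoid 𝕜] {p a b c d : 𝕜} (hab : a ≤ b) (hcd : c ≤ d) (hac : a ≤ c)
    (hcp : c ≤ a + p) :
    (((↑) '' Set.Icc a b : Set (AddCircle p)) ∩ (↑) '' Set.Icc c d).Nonempty ↔
      c ≤ b ∨ a + p ≤ d := by
  have hp : 0 ≤ p := le_add_iff_nonneg_right a |>.1 (hac.trans hcp)
  constructor
  · rintro ⟨_, ⟨x, ⟨hax, hxb⟩, rfl⟩, y, ⟨hcy, hyd⟩, hxy⟩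
    obtain ⟨k, hk⟩ : ∃ k : ℤ, k • p = y - x := by
      rw [← AddCircle.coe_eq_zero_iff, AddCircle.coe_sub, sub_eq_zero, hxy]
    obtain hk0 | hk1 : k ≤ 0 ∨ 1 ≤ k := by lia
    · have hyx : y ≤ x := sub_nonpos.1 (hk ▸ smul_nonpos_of_nonpos_of_nonneg hk0 hp)
      exact Or.inl (hcy.trans (hyx.trans hxb))
    · have hpy : p ≤ y - x := by
        simpa only [one_smul, hk] using zsmul_le_zsmul_left hp hk1
      exact Or.inr ((add_le_add_left hax p).trans ((le_sub_iff_add_le'.1 hpy).trans hyd))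
  · rintro (hcb | had)
    · exact ⟨c, ⟨c, ⟨hac, hcb⟩, rfl⟩, c, ⟨le_rfl, hcd⟩, rfl⟩
    · exact ⟨a, ⟨a, ⟨le_rfl, hab⟩, rfl⟩, a + p, ⟨hcp, had⟩, AddCircle.coe_add_period p a⟩

section CircularArcModel

variable {V : Type*} {G : SimpleGraph V} {s e : V → ℝ}

/-- A circular arc model of `G`: the arc of `v` runs clockwise from `s v` to `e v`, and two distinct
vertices are adjacent exactly when their arcs meet. -/
structure IsCircArcModel (G : SimpleGraph V) (s e : V → ℝ) : Prop where
  start_mem : ∀ v, s v ∈ Set.Ico (0 : ℝ) 1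
  end_mem : ∀ v, e v ∈ Set.Ico (0 : ℝ) 1
  adj_iff : ∀ u v : V, u ≠ v → (G.Adj u v ↔ (circArc s e u ∩ circArc s e v).Nonempty)

/-- The end `ẽ v` of the arc of `v`, lifted to the real line so that the arc is the image of
`[s v, ẽ v]`. -/
noncomputable def arcEnd (s e : V → ℝ) (v : V) : ℝ :=
  if s v ≤ e v then e v else e v + 1

/-- The vertices outside the cut `{v | s v < t}` whose starting point is at most the lifted end of
the arc of `u`; for `u` inside the cut, these are the starting points the arc of `u` runs over. -/
def forwardNbhds (s e : V → ℝ) (t : ℝ) (u : V) : Set V :=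
  {v | t ≤ s v ∧ s v ≤ arcEnd s e u}

/-- The vertices outside the cut `{v | s v < t}` whose arc passes `0` and reaches the starting point
of `u`. -/
def backwardNbhds (s e : V → ℝ) (t : ℝ) (u : V) : Set V :=
  {v | t ≤ s v ∧ s u + 1 ≤ arcEnd s e v}

theorem isChain_range_forwardNbhds (s e : V → ℝ) (t : ℝ) :
    IsChain (· ⊆ ·) (Set.range (forwardNbhds s e t)) := by
  have hmono : Monotone fun r : ℝ ↦ {v | t ≤ s v ∧ s v ≤ r} :=
    fun _ _ hr _ hv ↦ ⟨hv.1, hv.2.trans hr⟩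
  refine hmono.isChain_range.mono ?_
  rintro _ ⟨u, rfl⟩
  exact ⟨arcEnd s e u, rfl⟩

theorem isChain_range_backwardNbhds (s e : V → ℝ) (t : ℝ) :
    IsChain (· ⊆ ·) (Set.range (backwardNbhds s e t)) := by
  have hanti : Antitone fun r : ℝ ↦ {v | t ≤ s v ∧ r + 1 ≤ arcEnd s e v} :=
    fun _ _ hr _ hv ↦ ⟨hv.1, (add_le_add_left hr 1).trans hv.2⟩
  refine hanti.isChain_range.mono ?_
  rintro _ ⟨u, rfl⟩
  exact ⟨s u, rfl⟩

namespace IsCircArcModel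

theorem start_le_arcEnd (h : IsCircArcModel G s e) (v : V) : s v ≤ arcEnd s e v := by
  unfold arcEnd
  split_ifs with hv
  · exact hv
  · linarith [(h.start_mem v).2, (h.end_mem v).1]

theorem adj_iff_of_start_lt (h : IsCircArcModel G s e) {u v : V} (huv : s u < s v) :
    G.Adj u v ↔ s v ≤ arcEnd s e u ∨ s u + 1 ≤ arcEnd s e v := by
  have hwrap : s v ≤ s u + 1 := by linarith [(h.start_mem u).1, (h.start_mem v).2]
  rw [h.adj_iff u v (ne_of_apply_ne s huv.ne)]
  exact coe_image_Icc_inter_nonempty_iff (h.start_le_arcEnd u) (h.start_le_arcEnd v) huv.le hwrap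

theorem isClique_setOf_mem_Icc (h : IsCircArcModel G s e) (x : ℝ) :
    G.IsClique {v | x ∈ Set.Icc (s v) (arcEnd s e v)} :=
  fun u hu v hv huv ↦ (h.adj_iff u v huv).2 ⟨x, ⟨x, hu, rfl⟩, ⟨x, hv, rfl⟩⟩

theorem nbhds_inter_compl (h : IsCircArcModel G s e) {t : ℝ} {S : Set V} (hS : S ⊆ {v | s v < t}) :
    nbhds G S ∩ {v | s v < t}ᶜ = ⋃ u ∈ S, (forwardNbhds s e t u ∪ backwardNbhds s e t u) := by
  have hadj {u v : V} (hu : u ∈ S) (hv : t ≤ s v) := h.adj_iff_of_start_lt ((hS hu).trans_le hv)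
  ext v
  simp only [nbhds, forwardNbhds, backwardNbhds, Set.mem_inter_iff, Set.mem_compl_iff,
    Set.mem_ofPred_eq, Set.mem_iUnion, Set.mem_union, not_lt]
  constructor
  · rintro ⟨⟨u, hu, huv⟩, hv⟩
    exact ⟨u, hu, ((hadj hu hv).1 huv).imp (⟨hv, ·⟩) (⟨hv, ·⟩)⟩
  · rintro ⟨u, hu, ⟨hv, huv⟩ | ⟨hv, huv⟩⟩
    · exact ⟨⟨u, hu, (hadj hu hv).2 (Or.inl huv)⟩, hv⟩
    · exact ⟨⟨u, hu, (hadj hu hv).2 (Or.inr huv)⟩, hv⟩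

theorem encard_insert_empty_forwardNbhds_le (h : IsCircArcModel G s e) {n : ℕ}
    (hG : G.CliqueFree (n + 1)) (t : ℝ) :
    (insert ∅ (forwardNbhds s e t '' {v | s v < t})).encard ≤ n + 1 := by
  set C : Set V := {v | t ∈ Set.Icc (s v) (arcEnd s e v)}
  have hsub : insert ∅ (forwardNbhds s e t '' {v | s v < t}) ⊆
      insert ∅ (forwardNbhds s e t '' C) := by
    refine Set.insert_subset (Set.mem_insert _ _) ?_
    rintro _ ⟨u, hu, rfl⟩
    obtain hempty | ⟨v, htv, hvu⟩ := (forwardNbhds s e t u).eq_empty_or_nonempty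
    · exact Or.inl hempty
    · exact Or.inr ⟨u, ⟨le_of_lt hu, htv.trans hvu⟩, rfl⟩
  calc (insert ∅ (forwardNbhds s e t '' {v | s v < t})).encard
      ≤ (insert ∅ (forwardNbhds s e t '' C)).encard := Set.encard_le_encard hsub
    _ ≤ (forwardNbhds s e t '' C).encard + 1 := Set.encard_insert_le _ _
    _ ≤ C.encard + 1 := by gcongr; exact Set.encard_image_le _ _
    _ ≤ n + 1 := by
      gcongr
      exact encard_le_of_isClique_of_cliqueFree_add_one (h.isClique_setOf_mem_Icc t) hG

theorem encard_insert_empty_backwardNbhds_le (h : IsCircArcModel G s e) {n : ℕ}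
    (hG : G.CliqueFree (n + 1)) (t : ℝ) (A : Set V) :
    (insert ∅ (backwardNbhds s e t '' A)).encard ≤ n + 1 := by
  set C : Set V := {v | 1 ∈ Set.Icc (s v) (arcEnd s e v)}
  have hchain : IsChain (· ⊆ ·) (insert ∅ (backwardNbhds s e t '' A)) :=
    ((isChain_range_backwardNbhds s e t).mono (Set.image_subset_range _ A)).insert
      fun T _ _ ↦ Or.inl T.empty_subset
  have hsub : ∀ T ∈ insert ∅ (backwardNbhds s e t '' A), T ⊆ C := by
    rintro _ (rfl | ⟨u, -, rfl⟩)
    · exact C.empty_subset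
    · intro v hv
      exact ⟨(h.start_mem v).2.le, by linarith [hv.2, (h.start_mem u).1]⟩
  calc (insert ∅ (backwardNbhds s e t '' A)).encard
      ≤ C.encard + 1 := encard_le_encard_add_one_of_isChain hchain hsub
    _ ≤ n + 1 := by
      gcongr
      exact encard_le_of_isClique_of_cliqueFree_add_one (h.isClique_setOf_mem_Icc 1) hG

theorem finite_image_forwardNbhds (h : IsCircArcModel G s e) {n : ℕ}
    (hG : G.CliqueFree (n + 1)) (t : ℝ) :
    (forwardNbhds s e t '' {v | s v < t}).Finite :=
  (Set.finite_of_encard_le_coe (k := n + 1)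
    (mod_cast h.encard_insert_empty_forwardNbhds_le hG t)).subset (Set.subset_insert _ _)

theorem finite_image_backwardNbhds (h : IsCircArcModel G s e) {n : ℕ}
    (hG : G.CliqueFree (n + 1)) (t : ℝ) (A : Set V) :
    (backwardNbhds s e t '' A).Finite :=
  (Set.finite_of_encard_le_coe (k := n + 1)
    (mod_cast h.encard_insert_empty_backwardNbhds_le hG t A)).subset (Set.subset_insert _ _)

theorem exists_subset_encard_le_two_nbhds_inter_compl_eq (h : IsCircArcModel G s e) {n : ℕ}
    (hG : G.CliqueFree (n + 1)) {t : ℝ} {S : Set V} (hSA : S ⊆ {v | s v < t}) (hS : S.Nonempty) :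
    ∃ S' ⊆ S, S'.encard ≤ 2 ∧
      nbhds G S ∩ {v | s v < t}ᶜ = nbhds G S' ∩ {v | s v < t}ᶜ := by
  obtain ⟨S', hS'S, hS', hN⟩ := exists_subset_encard_le_two_biSup_sup_eq hS
    ((h.finite_image_forwardNbhds hG t).subset (Set.image_mono hSA))
    ((isChain_range_forwardNbhds s e t).mono (Set.image_subset_range _ S)).directedOn
    (h.finite_image_backwardNbhds hG t S)
    ((isChain_range_backwardNbhds s e t).mono (Set.image_subset_range _ S)).directedOn
  refine ⟨S', hS'S, hS', ?_⟩
  rw [h.nbhds_inter_compl hSA, h.nbhds_inter_compl (hS'S.trans hSA)]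
  exact hN

theorem cutNbhdFamily_subset_image2 (h : IsCircArcModel G s e) {n : ℕ}
    (hG : G.CliqueFree (n + 1)) (t : ℝ) :
    cutNbhdFamily G {v | s v < t} ⊆ Set.image2 (· ∪ ·)
      (insert ∅ (forwardNbhds s e t '' {v | s v < t}))
      (insert ∅ (backwardNbhds s e t '' {v | s v < t})) := by
  rintro _ ⟨X, hXA, rfl⟩
  refine ⟨⋃ u ∈ X, forwardNbhds s e t u, ?_, ⋃ u ∈ X, backwardNbhds s e t u, ?_, ?_⟩
  · exact biSup_mem_insert_bot_of_isChain (h.finite_image_forwardNbhds hG t)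
      ((isChain_range_forwardNbhds s e t).mono (Set.image_subset_range _ _)) hXA
  · exact biSup_mem_insert_bot_of_isChain (h.finite_image_backwardNbhds hG t _)
      ((isChain_range_backwardNbhds s e t).mono (Set.image_subset_range _ _)) hXA
  · simp only [h.nbhds_inter_compl hXA, Set.iUnion_union_distrib]

theorem encard_cutNbhdFamily_le (h : IsCircArcModel G s e) {n : ℕ}
    (hG : G.CliqueFree (n + 1)) (t : ℝ) :
    (cutNbhdFamily G {v | s v < t}).encard ≤ (n + 1) ^ 2 := by
  calc (cutNbhdFamily G {v | s v < t}).encard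
      ≤ (Set.image2 (· ∪ ·) (insert ∅ (forwardNbhds s e t '' {v | s v < t}))
          (insert ∅ (backwardNbhds s e t '' {v | s v < t}))).encard :=
        Set.encard_le_encard (h.cutNbhdFamily_subset_image2 hG t)
    _ ≤ (insert ∅ (forwardNbhds s e t '' {v | s v < t})).encard *
          (insert ∅ (backwardNbhds s e t '' {v | s v < t})).encard := encard_image2_le _ _ _
    _ ≤ (n + 1) * (n + 1) := mul_le_mul' (h.encard_insert_empty_forwardNbhds_le hG t)
        (h.encard_insert_empty_backwardNbhds_le hG t _)
    _ = (n + 1) ^ 2 := (sq _).symm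

end IsCircArcModel

end CircularArcModel

theorem circular_arc_graph_cut_nbhds_general {V : Type*} {G : SimpleGraph V} {s e : V → ℝ}
    (h : IsCircArcModel G s e) {n : ℕ} (hG : G.CliqueFree (n + 1)) (t : ℝ) :
    (∀ S : Set V, S ⊆ {v | s v < t} → S.Nonempty →
        ∃ S' ⊆ S, S'.encard ≤ 2 ∧
          nbhds G S ∩ {v | s v < t}ᶜ = nbhds G S' ∩ {v | s v < t}ᶜ) ∧
      (cutNbhdFamily G {v | s v < t}).encard ≤ (n + 1) ^ 2 :=
  ⟨fun _ ↦ h.exists_subset_encard_le_two_nbhds_inter_compl_eq hG, h.encard_cutNbhdFamily_le hG t⟩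

theorem circular_arc_graph_cut_nbhds {V : Type*} [Fintype V] [Nonempty V] (G : SimpleGraph V)
    (s e : V → ℝ) (hs : ∀ v, s v ∈ Set.Ico (0 : ℝ) 1) (he : ∀ v, e v ∈ Set.Ico (0 : ℝ) 1)
    (hmodel : ∀ u v : V, u ≠ v → (G.Adj u v ↔ (circArc s e u ∩ circArc s e v).Nonempty))
    (t : ℝ) (ht : t ∈ Set.Ico (0 : ℝ) 1) (A : Set V) (hA : A = {v | s v < t}) :
    (∀ S : Set V, S ⊆ A → S.Nonempty →
        ∃ S' ⊆ S, S'.ncard ≤ 2 ∧ nbhds G S ∩ Aᶜ = nbhds G S' ∩ Aᶜ) ∧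
      (cutNbhdFamily G A).ncard ≤ 4 * G.cliqueNum ^ 2 := by
  subst hA
  obtain ⟨hpair, hcard⟩ := circular_arc_graph_cut_nbhds_general ⟨hs, he, hmodel⟩
    (cliqueFree_cliqueNum_add_one G) t
  refine ⟨fun S hSA hS ↦ ?_, ?_⟩
  · obtain ⟨S', hS'S, hS', hN⟩ := hpair S hSA hS
    exact ⟨S', hS'S, ENat.toNat_le_of_le_natCast hS', hN⟩
  · calc (cutNbhdFamily G {v | s v < t}).ncard
        ≤ (G.cliqueNum + 1) ^ 2 := ENat.toNat_le_of_le_natCast (mod_cast hcard)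
      _ ≤ (2 * G.cliqueNum) ^ 2 := by gcongr; linarith [cliqueNum_pos G]
      _ = 4 * G.cliqueNum ^ 2 := by ring
end

section
/- Let G be a finite simple graph and k ≥ 1. Call two vertices u, v comparable if N(u) ⊆ N[v] or N(v) ⊆ N[u], where N[w] = N(w) ∪ {w} is the closed neighbourhood. Suppose G has Dilworth number at most k, i.e. every set of pairwise incomparable vertices has at most k elements. Then for every A ⊆ V(G) and every S ⊆ A there exists X ⊆ S with |X| ≤ k and N(S) ∩ (V(G) ∖ A) = N(X) ∩ (V(G) ∖ A); consequently, for every A ⊆ V(G) the cut-neighbourhood family of A has at most ∑_{i=0}^{k} C(n, i) elements, where n = |V(G)|. (This witnesses that every n-vertex Dilworth-k graph has boolean-width at most k·log₂ n.) -/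
/-- `u` and `v` are comparable if `N(u) ⊆ N[v]` or `N(v) ⊆ N[u]`. -/
def NbhdComparable {V : Type*} (G : SimpleGraph V) (u v : V) : Prop :=
  G.neighborSet u ⊆ insert v (G.neighborSet v) ∨ G.neighborSet v ⊆ insert u (G.neighborSet u)

/-!
Cut neighbourhoods are the unions of the sets `N(x) ∖ A`. In a finite such union, a term contained
in another one may be dropped, so a minimal `X ⊆ S` with the same union as `S` is indexed by terms
none of which contains another. If `X ⊆ A`, then `N(u) ⊆ N[v]` with `v ∈ A` forces
`N(u) ∖ A ⊆ N(v) ∖ A`; hence the vertices of `X` are pairwise incomparable and `|X| ≤ k`. Thus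
every cut neighbourhood of `A` is given by one of the subsets of `A` of size at most `k`.
-/

open Set

section Antichain

variable {ι α : Type*} [CompleteLattice α] {f : ι → α}

theorem biSup_sdiff_singleton_of_le {s : Set ι} {i j : ι} (hj : j ∈ s) (hij : i ≠ j)
    (h : f i ≤ f j) : ⨆ x ∈ s \ {i}, f x = ⨆ x ∈ s, f x := by
  refine le_antisymm (biSup_mono fun _ hx ↦ hx.1) (iSup₂_le fun x hx ↦ ?_)
  obtain rfl | hxi := eq_or_ne x i
  · exact h.trans (le_biSup f ⟨hj, hij.symm⟩)
  · exact le_biSup f ⟨hx, hxi⟩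

theorem exists_subset_isAntichain_biSup_eq {s : Set ι} (hs : s.Finite) :
    ∃ t ⊆ s, IsAntichain (f ⁻¹'o (· ≤ ·)) t ∧ ⨆ x ∈ t, f x = ⨆ x ∈ s, f x := by
  obtain ⟨t, ht⟩ := (hs.finite_subsets.subset fun _ ↦ And.left).exists_minimal
    (s := {t | t ⊆ s ∧ ⨆ x ∈ t, f x = ⨆ x ∈ s, f x}) ⟨s, Subset.rfl, rfl⟩
  refine ⟨t, ht.prop.1, fun i hi j hj hij hle ↦ ?_, ht.prop.2⟩
  exact ht.notMem_of_prop_sdiff_singleton ⟨sdiff_subset.trans ht.prop.1,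
    (biSup_sdiff_singleton_of_le hj hij hle).trans ht.prop.2⟩ hi

end Antichain

theorem ncard_subsets_ncard_le {α : Type*} {s : Set α} (hs : s.Finite) (k : ℕ) :
    {t ⊆ s | t.ncard ≤ k}.ncard = ∑ i ∈ Finset.range (k + 1), s.ncard.choose i := by
  induction k with
  | zero => simpa using ncard_powerset_ncard hs 0
  | succ k ih =>
    have h_split : {t ⊆ s | t.ncard ≤ k + 1} =
        {t ⊆ s | t.ncard ≤ k} ∪ {t ⊆ s | t.ncard = k + 1} := by
      ext t
      simp only [mem_union, mem_ofPred_eq, Nat.le_succ_iff, and_or_left]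
    have h_disj : Disjoint {t ⊆ s | t.ncard ≤ k} {t ⊆ s | t.ncard = k + 1} :=
      disjoint_left.2 fun t ht ht' ↦ (ht.2.trans_lt k.lt_succ_self).ne ht'.2
    rw [h_split, ncard_union_eq h_disj (hs.finite_subsets.subset fun _ ↦ And.left)
      (hs.finite_subsets.subset fun _ ↦ And.left), ih, ncard_powerset_ncard hs,
      Finset.sum_range_succ _ (k + 1)]

section CutNeighbourhoods

variable {V : Type*}

theorem nbhds_inter_compl (G : SimpleGraph V) (A X : Set V) :
    nbhds G X ∩ Aᶜ = ⋃ x ∈ X, G.neighborSet x \ A := by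
  ext v
  simp [nbhds, ← exists_and_right, and_assoc, and_left_comm]

variable {A : Set V}

theorem NbhdComparable.neighborSet_sdiff_subset_or {G : SimpleGraph V} {u v : V}
    (h : NbhdComparable G u v) (hu : u ∈ A) (hv : v ∈ A) :
    G.neighborSet u \ A ⊆ G.neighborSet v \ A ∨ G.neighborSet v \ A ⊆ G.neighborSet u \ A :=
  h.imp (fun h ↦ (sdiff_subset_sdiff_left h).trans_eq (insert_sdiff_of_mem _ hv))
    fun h ↦ (sdiff_subset_sdiff_left h).trans_eq (insert_sdiff_of_mem _ hu)

theorem exists_subset_isAntichain_nbhds_inter_compl_eq (G : SimpleGraph V) {S : Set V}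
    (hS : S.Finite) (hSA : S ⊆ A) :
    ∃ X ⊆ S, IsAntichain (NbhdComparable G) X ∧ nbhds G S ∩ Aᶜ = nbhds G X ∩ Aᶜ := by
  obtain ⟨X, hXS, hX, h_eq⟩ :=
    exists_subset_isAntichain_biSup_eq (f := fun x ↦ G.neighborSet x \ A) hS
  refine ⟨X, hXS, fun u hu v hv huv hcomp ↦ ?_, ?_⟩
  · exact (hcomp.neighborSet_sdiff_subset_or (hSA (hXS hu)) (hSA (hXS hv))).elim
      (hX hu hv huv) (hX hv hu huv.symm)
  · rw [nbhds_inter_compl, nbhds_inter_compl]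
    exact h_eq.symm

theorem ncard_cutNbhdFamily_le {G : SimpleGraph V} {k : ℕ} (hA : A.Finite)
    (hrep : ∀ S ⊆ A, ∃ X ⊆ A, X.ncard ≤ k ∧ nbhds G S ∩ Aᶜ = nbhds G X ∩ Aᶜ) :
    (cutNbhdFamily G A).ncard ≤ ∑ i ∈ Finset.range (k + 1), A.ncard.choose i := by
  have hfin : {X ⊆ A | X.ncard ≤ k}.Finite := hA.finite_subsets.subset fun _ ↦ And.left
  have hsub : cutNbhdFamily G A ⊆ (nbhds G · ∩ Aᶜ) '' {X ⊆ A | X.ncard ≤ k} := by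
    rintro _ ⟨S, hSA, rfl⟩
    obtain ⟨X, hXA, hXk, h_eq⟩ := hrep S hSA
    exact ⟨X, ⟨hXA, hXk⟩, h_eq.symm⟩
  calc (cutNbhdFamily G A).ncard
      ≤ ((nbhds G · ∩ Aᶜ) '' {X ⊆ A | X.ncard ≤ k}).ncard :=
        ncard_le_ncard hsub (hfin.image _)
    _ ≤ {X ⊆ A | X.ncard ≤ k}.ncard := ncard_image_le hfin
    _ = ∑ i ∈ Finset.range (k + 1), A.ncard.choose i := ncard_subsets_ncard_le hA k

end CutNeighbourhoods

theorem dilworth_graph_cut_nbhds_general {V : Type*} (G : SimpleGraph V) (k : ℕ) (A : Set V)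
    (hDil : ∀ X ⊆ A, X.Finite → IsAntichain (NbhdComparable G) X → X.ncard ≤ k) :
    (∀ S ⊆ A, S.Finite → ∃ X ⊆ S, X.ncard ≤ k ∧ nbhds G S ∩ Aᶜ = nbhds G X ∩ Aᶜ) ∧
      (A.Finite → (cutNbhdFamily G A).ncard ≤
        ∑ i ∈ Finset.range (k + 1), A.ncard.choose i) := by
  have hrep : ∀ S ⊆ A, S.Finite →
      ∃ X ⊆ S, X.ncard ≤ k ∧ nbhds G S ∩ Aᶜ = nbhds G X ∩ Aᶜ := by
    intro S hSA hS
    obtain ⟨X, hXS, hX, h_eq⟩ := exists_subset_isAntichain_nbhds_inter_compl_eq G hS hSA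
    exact ⟨X, hXS, hDil X (hXS.trans hSA) (hS.subset hXS) hX, h_eq⟩
  refine ⟨hrep, fun hA ↦ ncard_cutNbhdFamily_le hA fun S hSA ↦ ?_⟩
  obtain ⟨X, hXS, hX⟩ := hrep S hSA (hA.subset hSA)
  exact ⟨X, hXS.trans hSA, hX⟩

theorem dilworth_graph_cut_nbhds {V : Type*} [Fintype V] (G : SimpleGraph V) (k : ℕ)
    (hk : 1 ≤ k)
    (hDil : ∀ S : Set V,
      (∀ u ∈ S, ∀ v ∈ S, u ≠ v → ¬ NbhdComparable G u v) → S.ncard ≤ k) :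
    (∀ A S : Set V, S ⊆ A →
        ∃ X ⊆ S, X.ncard ≤ k ∧ nbhds G S ∩ Aᶜ = nbhds G X ∩ Aᶜ) ∧
      ∀ A : Set V, (cutNbhdFamily G A).ncard ≤
        ∑ i ∈ Finset.range (k + 1), (Fintype.card V).choose i := by
  have h_cut (A : Set V) := dilworth_graph_cut_nbhds_general G k A fun S _ _ hS ↦
    hDil S fun u hu v hv huv ↦ hS hu hv huv
  have h_card (A : Set V) : A.ncard ≤ Fintype.card V := by
    simpa using ncard_le_card A
  exact ⟨fun A S hSA ↦ (h_cut A).1 S hSA S.toFinite, fun A ↦ ((h_cut A).2 A.toFinite).trans <|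
    Finset.sum_le_sum fun i _ ↦ Nat.choose_le_choose i (h_card A)⟩
end

section
/- For all p, q ≥ 1, the Hsu-Stable-chain G on vertex set Fin q × Fin p — in which (i, j) and (i', j') are adjacent if and only if (i' = i + 1 and j ≤ j') or (i = i' + 1 and j' ≤ j) — is a bipartite permutation graph: it is bipartite (with parts given by the parity of the first coordinate), and it admits a permutation model, i.e. injective maps π, ρ : Fin q × Fin p → ℝ such that two distinct vertices u, v are adjacent if and only if (π(u) < π(v) and ρ(v) < ρ(u)) or (π(v) < π(u) and ρ(u) < ρ(v)). -/
/-!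
Read the stable sets, or levels, of the chain from left to right along two parallel lines, and call
the index of a vertex within its level its height. On the first line, merge each level `2k` with
level `2k + 1`, listing every such pair of levels by decreasing height and breaking ties in favour
of level `2k + 1`; then `(2k + 1, b)` precedes `(2k, a)` exactly when `a ≤ b`. On the second line,
merge the levels `2k - 1` and `2k` in the same way. Two consecutive levels are merged on exactly one
of the lines, and there the pairs out of level order are the adjacent ones; vertices in the same
level or at least two levels apart appear in the same order on both lines.
-/

open OrderDual

section PermutationModel

variable {V W α β : Type*} [LinearOrder α] [LinearOrder β]

/-- A permutation model of `G`, with the two parallel lines replaced by arbitrary linear orders: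
`v` is the segment from `π v` to `ρ v`, and adjacency is crossing of segments. Both sides of
`adj_iff` fail when `u = v`, so it is not restricted to distinct vertices. -/
structure IsPermutationModel (G : SimpleGraph V) (π : V → α) (ρ : V → β) : Prop where
  injective_left : Function.Injective π
  injective_right : Function.Injective ρ
  adj_iff (u v : V) : G.Adj u v ↔ (π u < π v ∧ ρ v < ρ u) ∨ (π v < π u ∧ ρ u < ρ v)

theorem IsPermutationModel.comap {G : SimpleGraph W} {π : W → α} {ρ : W → β}
    (h : IsPermutationModel G π ρ) (f : V ↪ W) :
    IsPermutationModel (G.comap f) (π ∘ f) (ρ ∘ f) where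
  injective_left := h.injective_left.comp f.injective
  injective_right := h.injective_right.comp f.injective
  adj_iff u v := h.adj_iff (f u) (f v)

theorem exists_real_lt_iff_lt [Countable V] (f : V → α) :
    ∃ g : V → ℝ, ∀ u v, g u < g v ↔ f u < f v := by
  have := (Set.countable_range f).to_subtype
  obtain ⟨e⟩ := Order.embedding_from_countable_to_dense (Set.range f) ℝ
  exact ⟨fun v => e ⟨f v, v, rfl⟩, fun _ _ => e.lt_iff_lt⟩

theorem injective_of_lt_iff_lt {f : V → α} {g : V → β} (hf : Function.Injective f)
    (hfg : ∀ u v, g u < g v ↔ f u < f v) : Function.Injective g := fun u v huv =>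
  hf <| le_antisymm (not_lt.1 ((hfg v u).not.1 huv.not_gt)) (not_lt.1 ((hfg u v).not.1 huv.not_lt))

theorem IsPermutationModel.exists_real [Countable V] {G : SimpleGraph V} {π : V → α} {ρ : V → β}
    (h : IsPermutationModel G π ρ) : ∃ π' ρ' : V → ℝ, IsPermutationModel G π' ρ' := by
  obtain ⟨π', hπ⟩ := exists_real_lt_iff_lt π
  obtain ⟨ρ', hρ⟩ := exists_real_lt_iff_lt ρ
  exact ⟨π', ρ', injective_of_lt_iff_lt h.injective_left hπ,
    injective_of_lt_iff_lt h.injective_right hρ, by simpa only [hπ, hρ] using h.adj_iff⟩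

end PermutationModel

/-- The Hsu-Stable-chain that is infinite in both directions and whose stable sets are copies of
`α`: the vertex `(i, a)` has level `i` and height `a`. The chains of finite length and width are
induced subgraphs of it. -/
def hsuStableChain (α : Type*) [LE α] : SimpleGraph (ℤ × α) where
  Adj u v := (u.1 + 1 = v.1 ∧ u.2 ≤ v.2) ∨ (v.1 + 1 = u.1 ∧ v.2 ≤ u.2)
  symm := ⟨fun _ _ => Or.symm⟩
  loopless := ⟨fun _ h => by omega⟩

theorem hsuStableChain_emod_two_ne {α : Type*} [LE α] {u v : ℤ × α}
    (h : (hsuStableChain α).Adj u v) : u.1 % 2 ≠ v.1 % 2 := by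
  rcases h with ⟨h, -⟩ | ⟨h, -⟩ <;> omega

section Interleave

variable {α : Type*}

/-- The position of the vertex `(i, a)` on a line where the levels `2k` and `2k + 1` are merged,
for every `k`. The levels merged on the other line are obtained by passing `i + 1` for `i`. -/
def interleave (i : ℤ) (a : α) : ℤ ×ₗ (α ×ₗ ℤ)ᵒᵈ :=
  toLex (i / 2, toDual (toLex (a, i)))

theorem interleave_inj {i j : ℤ} {a b : α} : interleave i a = interleave j b ↔ i = j ∧ a = b := by
  simp only [interleave, EmbeddingLike.apply_eq_iff_eq, Prod.mk.injEq]
  grind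

variable [LinearOrder α] {i j : ℤ} {a b : α}

theorem interleave_lt_interleave_iff :
    interleave i a < interleave j b ↔
      i / 2 < j / 2 ∨ i / 2 = j / 2 ∧ (b < a ∨ b = a ∧ j < i) := by
  simp only [interleave, Prod.Lex.toLex_lt_toLex, toDual_lt_toDual]

theorem interleave_lt_interleave_left_iff : interleave i a < interleave i b ↔ b < a := by
  simp [interleave_lt_interleave_iff]

theorem interleave_lt_interleave_of_add_two_le (h : i + 2 ≤ j) :
    interleave i a < interleave j b :=
  interleave_lt_interleave_iff.2 <| .inl <| by omega

theorem interleave_lt_interleave_succ_of_odd (h : Odd i) :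
    interleave i a < interleave (i + 1) b :=
  interleave_lt_interleave_iff.2 <| .inl <| by grind

theorem interleave_succ_lt_interleave_iff_of_even (h : Even i) :
    interleave (i + 1) b < interleave i a ↔ a ≤ b := by
  have same_pair : (i + 1) / 2 = i / 2 := by grind
  simp [interleave_lt_interleave_iff, same_pair, le_iff_lt_or_eq]

theorem interleave_crosses_succ_iff :
    (interleave i a < interleave (i + 1) b ∧ interleave (i + 1 + 1) b < interleave (i + 1) a) ∨
      (interleave (i + 1) b < interleave i a ∧ interleave (i + 1) a < interleave (i + 1 + 1) b) ↔
      a ≤ b := by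
  rcases Int.even_or_odd i with hi | hi
  · have ordered : interleave (i + 1) a < interleave (i + 1 + 1) b :=
      interleave_lt_interleave_succ_of_odd hi.add_one
    simp [ordered, ordered.not_gt, interleave_succ_lt_interleave_iff_of_even hi]
  · have ordered : interleave i a < interleave (i + 1) b :=
      interleave_lt_interleave_succ_of_odd hi
    simp [ordered, ordered.not_gt, interleave_succ_lt_interleave_iff_of_even hi.add_one]

end Interleave

theorem isPermutationModel_hsuStableChain (α : Type*) [LinearOrder α] :
    IsPermutationModel (hsuStableChain α)
      (fun u => interleave u.1 u.2) (fun u => interleave (u.1 + 1) u.2) where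
  injective_left u v h := Prod.ext_iff.2 (interleave_inj.1 h)
  injective_right u v h := Prod.ext_iff.2 <| (interleave_inj.1 h).imp_left add_right_cancel
  adj_iff u v := by
    wlog hle : u.1 ≤ v.1 generalizing u v
    · rw [SimpleGraph.adj_comm, this v u (le_of_not_ge hle), or_comm]
    obtain ⟨i, a⟩ := u
    obtain ⟨j, b⟩ := v
    have hdist : j = i ∨ j = i + 1 ∨ i + 2 ≤ j := by grind
    rcases hdist with rfl | rfl | hij
    · simp only [hsuStableChain, interleave_lt_interleave_left_iff]
      grind
    · rw [interleave_crosses_succ_iff]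
      simp only [hsuStableChain]
      grind
    · have hπ : interleave i a < interleave j b := interleave_lt_interleave_of_add_two_le hij
      have hρ : interleave (i + 1) a < interleave (j + 1) b :=
        interleave_lt_interleave_of_add_two_le (by omega)
      simp only [hsuStableChain, hπ.not_gt, hρ.not_gt]
      grind

/-- The vertices of the finite chain of length `q` and width `p`, placed at the levels
`0, …, q - 1` of the infinite chain. -/
def finChainEmbedding (p q : ℕ) : Fin q × Fin p ↪ ℤ × Fin p where
  toFun u := ((u.1 : ℕ), u.2)
  inj' u v h := by simpa [Prod.ext_iff, Fin.ext_iff] using h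

theorem finChainEmbedding_apply {p q : ℕ} (u : Fin q × Fin p) :
    finChainEmbedding p q u = (((u.1 : ℕ) : ℤ), u.2) := rfl

theorem comap_finChainEmbedding_adj {p q : ℕ} {u v : Fin q × Fin p} :
    ((hsuStableChain (Fin p)).comap (finChainEmbedding p q)).Adj u v ↔
      ((u.1 : ℕ) + 1 = (v.1 : ℕ) ∧ (u.2 : ℕ) ≤ (v.2 : ℕ)) ∨
      ((v.1 : ℕ) + 1 = (u.1 : ℕ) ∧ (v.2 : ℕ) ≤ (u.2 : ℕ)) := by
  simp only [SimpleGraph.comap_adj, hsuStableChain, finChainEmbedding_apply]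
  norm_cast

theorem hsu_stable_chain_is_bipartite_permutation_general {V α : Type*} [Countable V]
    [LinearOrder α] (f : V ↪ ℤ × α) :
    (∀ u v, ((hsuStableChain α).comap f).Adj u v → (f u).1 % 2 ≠ (f v).1 % 2) ∧
      ∃ π ρ : V → ℝ, IsPermutationModel ((hsuStableChain α).comap f) π ρ :=
  ⟨fun _ _ h => hsuStableChain_emod_two_ne h,
    ((isPermutationModel_hsuStableChain α).comap f).exists_real⟩

theorem hsu_stable_chain_is_bipartite_permutation (p q : ℕ) (hp : 1 ≤ p) (hq : 1 ≤ q)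
    (G : SimpleGraph (Fin q × Fin p))
    (hG : ∀ u v : Fin q × Fin p, G.Adj u v ↔
      ((u.1 : ℕ) + 1 = (v.1 : ℕ) ∧ (u.2 : ℕ) ≤ (v.2 : ℕ)) ∨
      ((v.1 : ℕ) + 1 = (u.1 : ℕ) ∧ (v.2 : ℕ) ≤ (u.2 : ℕ))) :
    (∀ u v : Fin q × Fin p, G.Adj u v → (u.1 : ℕ) % 2 ≠ (v.1 : ℕ) % 2) ∧
    ∃ π ρ : Fin q × Fin p → ℝ, Function.Injective π ∧ Function.Injective ρ ∧
      ∀ u v : Fin q × Fin p, u ≠ v →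
        (G.Adj u v ↔ (π u < π v ∧ ρ v < ρ u) ∨ (π v < π u ∧ ρ u < ρ v)) := by
  obtain rfl : G = (hsuStableChain (Fin p)).comap (finChainEmbedding p q) := by
    ext u v
    rw [hG, comap_finChainEmbedding_adj]
  obtain ⟨parity, π, ρ, h⟩ :=
    hsu_stable_chain_is_bipartite_permutation_general (finChainEmbedding p q)
  simp only [finChainEmbedding_apply] at parity
  exact ⟨mod_cast parity, π, ρ, h.injective_left, h.injective_right, fun u v _ => h.adj_iff u v⟩
end

section
/- For all p, q ≥ 1, the Hsu-Clique-chain G on vertex set Fin q × Fin p — in which distinct (i, j) and (i', j') are adjacent if and only if i = i', or (i' = i + 1 and j ≤ j'), or (i = i' + 1 and j' ≤ j) — is a unit interval graph: there exists an injective map f : Fin q × Fin p → ℝ such that two distinct vertices u, v are adjacent if and only if |f(u) − f(v)| ≤ 1. -/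
/-!
Place the `j`-th vertex of the `i`-th clique at `i - t j`, where `t` is strictly increasing with
values less than `1` apart. Two positions differ by an integer minus a number of absolute value less
than `1`, so they are within distance `1` only if the cliques are equal or consecutive, and in the
consecutive case exactly when the `t`-values are in the order that the Hsu graph prescribes.
-/

section

variable {R : Type*} [Ring R] [LinearOrder R] [IsStrictOrderedRing R] {n : ℤ} {z : R}

theorem intCast_eq_iff_of_abs_lt_one (hz : |z| < 1) : (n : R) = z ↔ n = 0 ∧ z = 0 := by
  refine ⟨fun h => ?_, fun ⟨hn, hz₀⟩ => by simp [hn, hz₀]⟩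
  have hn : n = 0 := Int.abs_lt_one_iff.1 (by rw [← h] at hz; exact mod_cast hz)
  exact ⟨hn, by simp [← h, hn]⟩

theorem abs_intCast_sub_le_one_iff_of_abs_lt_one (hz : |z| < 1) :
    |(n : R) - z| ≤ 1 ↔ n = 0 ∨ (n = -1 ∧ z ≤ 0) ∨ (n = 1 ∧ 0 ≤ z) := by
  constructor
  · intro h
    have hn : |(n : R)| < 2 :=
      calc |(n : R)| = |(n - z) + z| := by rw [sub_add_cancel]
        _ ≤ |n - z| + |z| := abs_add_le _ _
        _ < 1 + 1 := add_lt_add_of_le_of_lt h hz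
        _ = 2 := one_add_one_eq_two
    have hn' : |n| < 2 := mod_cast hn
    obtain rfl | rfl | rfl : n = 0 ∨ n = -1 ∨ n = 1 := by grind
    · exact .inl rfl
    · exact .inr (.inl ⟨rfl, by simpa using (abs_le.1 h).1⟩)
    · exact .inr (.inr ⟨rfl, by simpa using (abs_le.1 h).2⟩)
  · obtain ⟨hz₁, hz₂⟩ := abs_lt.1 hz
    rintro (rfl | ⟨rfl, h⟩ | ⟨rfl, h⟩) <;> rw [abs_le] <;> push_cast <;> grind

end

theorem exists_orderEmbedding_abs_sub_lt_one (k : Type*) [Field k] [LinearOrder k]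
    [IsStrictOrderedRing k] : ∃ t : k ↪o k, ∀ x y, |t x - t y| < 1 := by
  let s := orderIsoIooNegOneOne k
  refine ⟨.ofStrictMono (fun x => (s x : k) / 2)
    fun x y h => div_lt_div_of_pos_right (s.strictMono h) two_pos, fun x y => ?_⟩
  obtain ⟨hx₁, hx₂⟩ := (s x).2
  obtain ⟨hy₁, hy₂⟩ := (s y).2
  change |(s x : k) / 2 - s y / 2| < 1
  rw [abs_lt]
  constructor <;> linarith

theorem hsu_clique_chain_is_unit_interval_general {ι α : Type*} [LE α] (e : ι ↪ ℤ) (r : α ↪o ℝ)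
    (G : SimpleGraph (ι × α))
    (hG : ∀ u v : ι × α, u ≠ v → (G.Adj u v ↔
      u.1 = v.1 ∨ (e u.1 + 1 = e v.1 ∧ u.2 ≤ v.2) ∨ (e v.1 + 1 = e u.1 ∧ v.2 ≤ u.2))) :
    ∃ f : ι × α → ℝ, Function.Injective f ∧
      ∀ u v : ι × α, u ≠ v → (G.Adj u v ↔ |f u - f v| ≤ 1) := by
  obtain ⟨s, hs⟩ := exists_orderEmbedding_abs_sub_lt_one ℝ
  let t : α ↪o ℝ := r.trans s
  have ht (u v : ι × α) : |t u.2 - t v.2| < 1 := hs _ _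
  let f (u : ι × α) : ℝ := e u.1 - t u.2
  have f_sub (u v : ι × α) : f u - f v = (e u.1 - e v.1 : ℤ) - (t u.2 - t v.2) := by
    simp only [f]; push_cast; ring
  refine ⟨f, fun u v h => ?_, fun u v huv => ?_⟩
  · rw [← sub_eq_zero, f_sub, sub_eq_zero, intCast_eq_iff_of_abs_lt_one (ht u v), sub_eq_zero,
      sub_eq_zero, e.injective.eq_iff, t.injective.eq_iff] at h
    exact Prod.ext h.1 h.2
  · rw [hG u v huv, f_sub, abs_intCast_sub_le_one_iff_of_abs_lt_one (ht u v), sub_nonpos,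
      sub_nonneg, t.map_rel_iff, t.map_rel_iff, ← e.injective.eq_iff]
    grind

theorem hsu_clique_chain_is_unit_interval (p q : ℕ) (hp : 1 ≤ p) (hq : 1 ≤ q)
    (G : SimpleGraph (Fin q × Fin p))
    (hG : ∀ u v : Fin q × Fin p, u ≠ v → (G.Adj u v ↔
      u.1 = v.1 ∨
      ((u.1 : ℕ) + 1 = (v.1 : ℕ) ∧ (u.2 : ℕ) ≤ (v.2 : ℕ)) ∨
      ((v.1 : ℕ) + 1 = (u.1 : ℕ) ∧ (v.2 : ℕ) ≤ (u.2 : ℕ)))) :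
    ∃ f : Fin q × Fin p → ℝ, Function.Injective f ∧
      ∀ u v : Fin q × Fin p, u ≠ v → (G.Adj u v ↔ |f u - f v| ≤ 1) :=
  hsu_clique_chain_is_unit_interval_general (Fin.valEmbedding.trans Nat.castEmbedding)
    ((Fin.valOrderEmb p).trans Nat.castOrderEmbedding) G fun u v huv =>
      (hG u v huv).trans <| or_congr_right <|
        or_congr (and_congr_left' Nat.cast_inj.symm) (and_congr_left' Nat.cast_inj.symm)
end

section
/- Let p ≥ 1 and q > 3p, and let G be the Hsu-Clique-chain on vertex set V = Fin q × Fin p (distinct (i, j) and (i', j') adjacent iff i = i', or (i' = i + 1 and j ≤ j'), or (i = i' + 1 and j' ≤ j)); set n = p·q. Then for every A ⊆ V with n ≤ 3|A| and 3|A| ≤ 2n (i.e. n/3 ≤ |A| ≤ 2n/3), the matrix M over the field ℤ/2ℤ with rows indexed by A and columns indexed by V ∖ A, where M(u, v) = 1 if u and v are adjacent and 0 otherwise, satisfies 2·rank(M) ≥ p. (Since every decomposition tree contains a balanced cut, this shows the Hsu-Clique-chain has rank-width at least p/2, and hence there exist unit interval graphs on n vertices with rank-width Ω(√n).) -/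
/-!
The cut-rank of `A` is at least the size of any family of edges `f s — g s` leaving `A` whose
adjacency submatrix is triangular for some linear order on the indices `s`.  View each `K₁, …, K_q`
as a row of a grid, so that the vertices with the same `j` form a column.

* If some column lies inside `A`, then joining it, inside each row, to a vertex of that row outside
  `A` gives an edge leaving `A`; the edges from pairwise non-consecutive rows form an induced
  matching.  The rows that meet `Aᶜ` number at least `|Aᶜ| / p ≥ p`, and at least half of them have
  the same parity.  The same applies to a column inside `Aᶜ`, since cut-rank is symmetric under
  complement.
* Otherwise every column has two consecutive vertices separated by `A`.  The resulting `p` edges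
  are of two kinds, entering `A` or leaving `A` as the row index grows, and each kind is triangular.
-/

open Finset

/-- The cut-rank over the field `K` of the cut `(A, Aᶜ)` of the graph `G`: the rank of the
adjacency matrix restricted to rows in `A` and columns in `Aᶜ`. -/
noncomputable def cutRank {V : Type*} [Fintype V] [DecidableEq V] (K : Type*) [Field K]
    (G : SimpleGraph V) (A : Finset V) : ℕ :=
  open scoped Classical in
  ((G.adjMatrix K).submatrix ((↑) : {x // x ∈ A} → V) ((↑) : {x // x ∈ Aᶜ} → V)).rank

/-- The Hsu-Clique-chain of length `q`, with cliques indexed by an ordered type `β` in place of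
`{1, …, p}`: the vertex `(i, j)` is the `j`-th vertex of the `i`-th clique. -/
def hsuCliqueChain (q : ℕ) (β : Type*) [LE β] : SimpleGraph (Fin q × β) :=
  SimpleGraph.fromRel fun u v => u.1 = v.1 ∨ ((u.1 : ℕ) + 1 = v.1 ∧ u.2 ≤ v.2)

theorem card_le_rank_of_isLowerTriangular_submatrix {R m n ι : Type*} [CommRing R] [Nontrivial R]
    [Fintype n] [Fintype ι] [LinearOrder ι] {M : Matrix m n R} {f : ι → m} {g : ι → n}
    (h : (M.submatrix f g).IsLowerTriangular)
    (hdiag : ∀ s, M (f s) (g s) ∈ nonZeroDivisors R) : Fintype.card ι ≤ M.rank := by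
  have hdet : (M.submatrix f g).det ∈ nonZeroDivisors R := by
    rw [Matrix.det_of_isLowerTriangular _ h]
    exact prod_mem fun s _ => hdiag s
  exact (Matrix.rank_of_det_mem_nonZeroDivisors hdet).ge.trans (M.rank_submatrix_le f g)

section CutRank

variable {V K : Type*} [Fintype V] [DecidableEq V] [Field K] {G : SimpleGraph V} {A : Finset V}

variable (K G A) in
theorem cutRank_compl : cutRank K G Aᶜ = cutRank K G A := by
  classical
  let e : {x // x ∈ A} ≃ {x // x ∈ Aᶜᶜ} := Equiv.subtypeEquivRight fun x => by simp
  rw [cutRank, ← Matrix.rank_submatrix _ (Equiv.refl _) e, ← Matrix.rank_transpose]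
  simp [cutRank, Matrix.transpose_submatrix, Function.comp_def, e]

theorem card_le_cutRank_of_adj_le {ι α : Type*} [Fintype ι] [LinearOrder α] {f g : ι → V}
    (hf : ∀ s, f s ∈ A) (hg : ∀ s, g s ∉ A) (hfg : ∀ s, G.Adj (f s) (g s))
    (r : ι → α) (hr : Function.Injective r) (h : ∀ s t, G.Adj (f s) (g t) → r t ≤ r s) :
    Fintype.card ι ≤ cutRank K G A := by
  classical
  let _ : LinearOrder ι := LinearOrder.lift' r hr
  refine card_le_rank_of_isLowerTriangular_submatrix (f := fun s => ⟨f s, hf s⟩)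
    (g := fun s => ⟨g s, mem_compl.2 (hg s)⟩) (fun s t hst => ?_) fun s => ?_
  · have hadj : ¬ G.Adj (f s) (g t) := fun hadj => (h s t hadj).not_gt hst
    simp [hadj]
  · simp [hfg s]

end CutRank

section HsuCliqueChain

variable {q : ℕ} {β K : Type*}

section LE

variable [LE β]

theorem hsuCliqueChain_adj {u v : Fin q × β} :
    (hsuCliqueChain q β).Adj u v ↔ u ≠ v ∧ (u.1 = v.1 ∨
      ((u.1 : ℕ) + 1 = v.1 ∧ u.2 ≤ v.2) ∨ ((v.1 : ℕ) + 1 = u.1 ∧ v.2 ≤ u.2)) := by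
  rw [hsuCliqueChain, SimpleGraph.fromRel_adj, eq_comm (a := v.1)]
  tauto

theorem eq_hsuCliqueChain {G : SimpleGraph (Fin q × β)}
    (hG : ∀ u v : Fin q × β, u ≠ v → (G.Adj u v ↔ u.1 = v.1 ∨
      ((u.1 : ℕ) + 1 = v.1 ∧ u.2 ≤ v.2) ∨ ((v.1 : ℕ) + 1 = u.1 ∧ v.2 ≤ u.2))) :
    G = hsuCliqueChain q β := by
  ext u v
  rw [hsuCliqueChain_adj]
  exact ⟨fun h => ⟨h.ne, (hG u v h.ne).1 h⟩, fun h => (hG u v h.1).2 h.2⟩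

variable [Fintype β] [DecidableEq β] [Field K] {A : Finset (Fin q × β)}

theorem card_le_cutRank_of_nonconsecutive {j : β} {T : Finset (Fin q)}
    (hj : ∀ i ∈ T, (i, j) ∈ A) (hT : ∀ i ∈ T, ∃ b, (i, b) ∉ A)
    (hcons : ∀ i ∈ T, ∀ k ∈ T, (i : ℕ) + 1 ≠ k) :
    #T ≤ cutRank K (hsuCliqueChain q β) A := by
  choose b hb using fun i : T => hT i i.2
  rw [← Fintype.card_coe]
  refine card_le_cutRank_of_adj_le (f := fun i : T => ((i : Fin q), j)) (g := fun i => (i, b i))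
    (fun i => hj i i.2) hb (fun i => ?_) id Function.injective_id fun i k hik => ?_
  · exact hsuCliqueChain_adj.2 ⟨ne_of_mem_of_not_mem (hj i i.2) (hb i), .inl rfl⟩
  · obtain ⟨-, heq | ⟨hsucc, -⟩ | ⟨hsucc, -⟩⟩ := hsuCliqueChain_adj.1 hik
    · exact (Subtype.ext heq).ge
    · exact absurd hsucc (hcons i i.2 k k.2)
    · exact absurd hsucc (hcons k k.2 i i.2)

theorem card_image_fst_compl_le_two_mul_cutRank {j : β} (hj : ∀ i, (i, j) ∈ A) :
    #(Aᶜ.image Prod.fst) ≤ 2 * cutRank K (hsuCliqueChain q β) A := by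
  set T := Aᶜ.image Prod.fst with hTdef
  have hT : ∀ i ∈ T, ∃ b, (i, b) ∉ A := by simp [hTdef]
  have heven : #(T.filter fun i : Fin q => Even (i : ℕ)) ≤ cutRank K (hsuCliqueChain q β) A :=
    card_le_cutRank_of_nonconsecutive (fun i _ => hj i) (fun i hi => hT i (mem_filter.1 hi).1)
      (by grind)
  have hodd : #(T.filter fun i : Fin q => ¬ Even (i : ℕ)) ≤ cutRank K (hsuCliqueChain q β) A :=
    card_le_cutRank_of_nonconsecutive (fun i _ => hj i) (fun i hi => hT i (mem_filter.1 hi).1)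
      (by grind)
  have hsplit := card_filter_add_card_filter_not (s := T) fun i : Fin q => Even (i : ℕ)
  omega

theorem card_le_two_mul_cutRank_of_full_column {j : β} (hj : ∀ i, (i, j) ∈ A)
    (hA : Fintype.card β ^ 2 ≤ #Aᶜ) :
    Fintype.card β ≤ 2 * cutRank K (hsuCliqueChain q β) A := by
  have hsub : Aᶜ ⊆ Aᶜ.image Prod.fst ×ˢ univ := fun x hx =>
    mem_product.2 ⟨mem_image_of_mem _ hx, mem_univ _⟩
  have hcard : Fintype.card β * Fintype.card β ≤ #(Aᶜ.image Prod.fst) * Fintype.card β := by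
    simpa [sq] using hA.trans (card_le_card hsub)
  have hpos : 0 < Fintype.card β := Fintype.card_pos_iff.2 ⟨j⟩
  exact (Nat.le_of_mul_le_mul_right hcard hpos).trans
    (card_image_fst_compl_le_two_mul_cutRank hj)

end LE

/-- The `j` for which the sequence `(0, j), (1, j), …` leaves `A` at some step. -/
def exitColumns [Fintype β] [DecidableEq β] (A : Finset (Fin q × β)) : Finset β :=
  {j | ∃ i k : Fin q, (i : ℕ) + 1 = k ∧ (i, j) ∈ A ∧ (k, j) ∉ A}

theorem mem_exitColumns_or_mem_exitColumns_compl [Fintype β] [DecidableEq β]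
    {A : Finset (Fin q × β)} {j : β} (hin : ∃ i, (i, j) ∈ A) (hout : ∃ i, (i, j) ∉ A) :
    j ∈ exitColumns A ∨ j ∈ exitColumns Aᶜ := by
  obtain ⟨a, ha⟩ := hin
  obtain ⟨b, hb⟩ := hout
  obtain ⟨walk⟩ := SimpleGraph.pathGraph_preconnected q a b
  obtain ⟨⟨⟨i, k⟩, hik⟩, -, hi, hk⟩ := walk.exists_boundary_dart {i | (i, j) ∈ A} ha hb
  simp only [exitColumns, mem_filter_univ, mem_compl, not_not]
  exact (SimpleGraph.pathGraph_adj.1 hik).imp (fun h => ⟨i, k, h, hi, hk⟩)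
    fun h => ⟨k, i, h, hk, hi⟩

variable [LinearOrder β] [Fintype β] [Field K] {A : Finset (Fin q × β)}

variable (K A) in
theorem card_exitColumns_le_cutRank :
    #(exitColumns A) ≤ cutRank K (hsuCliqueChain q β) A := by
  choose c d hsucc hc hd using fun j : exitColumns A => (mem_filter_univ _).1 j.2
  rw [← Fintype.card_coe]
  -- Within one row the exits span part of a Hsu graph, which is triangular for decreasing `j`.
  refine card_le_cutRank_of_adj_le hc hd (fun j => ?_)
    (fun j => toLex (c j, OrderDual.toDual j)) (fun s t hst => ?_) fun s t hst => ?_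
  · exact hsuCliqueChain_adj.2
      ⟨ne_of_mem_of_not_mem (hc j) (hd j), .inr (.inl ⟨hsucc j, le_rfl⟩)⟩
  · simpa using congrArg Prod.snd (toLex.injective hst)
  · rw [Prod.Lex.toLex_le_toLex]
    have hs := hsucc s
    have ht := hsucc t
    obtain ⟨-, heq | ⟨hsucc', hle⟩ | ⟨hsucc', -⟩⟩ := hsuCliqueChain_adj.1 hst
    · left
      grind
    · right
      exact ⟨by grind, hle⟩
    · left
      grind

theorem card_le_two_mul_cutRank_of_mixed_columns (hin : ∀ j, ∃ i, (i, j) ∈ A)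
    (hout : ∀ j, ∃ i, (i, j) ∉ A) :
    Fintype.card β ≤ 2 * cutRank K (hsuCliqueChain q β) A :=
  calc Fintype.card β
    _ = #(exitColumns A ∪ exitColumns Aᶜ) := by
        rw [eq_univ_of_forall fun j => mem_union.2
          (mem_exitColumns_or_mem_exitColumns_compl (hin j) (hout j)), card_univ]
    _ ≤ #(exitColumns A) + #(exitColumns Aᶜ) := card_union_le _ _
    _ ≤ cutRank K (hsuCliqueChain q β) A + cutRank K (hsuCliqueChain q β) Aᶜ :=
        add_le_add (card_exitColumns_le_cutRank K A) (card_exitColumns_le_cutRank K Aᶜ)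
    _ = 2 * cutRank K (hsuCliqueChain q β) A := by rw [cutRank_compl, two_mul]

variable (K A) in
theorem hsu_clique_chain_balanced_cut_rank_general (hA : Fintype.card β ^ 2 ≤ #A)
    (hAc : Fintype.card β ^ 2 ≤ #Aᶜ) :
    Fintype.card β ≤ 2 * cutRank K (hsuCliqueChain q β) A := by
  by_cases hfull : ∃ j, ∀ i, (i, j) ∈ A
  · obtain ⟨j, hj⟩ := hfull
    exact card_le_two_mul_cutRank_of_full_column hj hAc
  by_cases hempty : ∃ j, ∀ i, (i, j) ∉ A
  · obtain ⟨j, hj⟩ := hempty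
    rw [← cutRank_compl]
    exact card_le_two_mul_cutRank_of_full_column (fun i => mem_compl.2 (hj i)) (by simpa using hA)
  push Not at hfull hempty
  exact card_le_two_mul_cutRank_of_mixed_columns hempty hfull

end HsuCliqueChain

open scoped Classical in
theorem hsu_clique_chain_balanced_cut_rank (p q : ℕ) (hp : 1 ≤ p) (hq : 3 * p < q)
    (G : SimpleGraph (Fin q × Fin p))
    (hG : ∀ u v : Fin q × Fin p, u ≠ v → (G.Adj u v ↔
      u.1 = v.1 ∨
      ((u.1 : ℕ) + 1 = (v.1 : ℕ) ∧ (u.2 : ℕ) ≤ (v.2 : ℕ)) ∨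
      ((v.1 : ℕ) + 1 = (u.1 : ℕ) ∧ (v.2 : ℕ) ≤ (u.2 : ℕ))))
    (n : ℕ) (hn : n = p * q)
    (A : Finset (Fin q × Fin p)) (h1 : n ≤ 3 * A.card) (h2 : 3 * A.card ≤ 2 * n) :
    p ≤ 2 * (Matrix.of fun (u : {x // x ∈ A}) (v : {x // x ∈ Aᶜ}) =>
        if G.Adj u.1 v.1 then (1 : ZMod 2) else 0).rank := by
  obtain rfl := eq_hsuCliqueChain hG
  have hcard : #A + #Aᶜ = p * q := by simp [card_add_card_compl, mul_comm]
  have hpq : 3 * p ^ 2 ≤ p * q := by nlinarith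
  simpa using! hsu_clique_chain_balanced_cut_rank_general (ZMod 2) A
    (by rw [Fintype.card_fin]; omega) (by rw [Fintype.card_fin]; omega)
end

section
/- Let G be a finite simple graph, A ⊆ V(G), and let k ≥ 1 and d ≥ 1 be integers. Suppose that for every S ⊆ A there exists R ⊆ S with |R| ≤ k and N(S) ∩ (V(G) ∖ A) = N(R) ∩ (V(G) ∖ A). Then for every S ⊆ A there exists R' ⊆ S with |R'| ≤ d·k such that R' is d-neighbour equivalent to S with respect to A, i.e. for every v ∈ V(G) ∖ A, min(d, |N(v) ∩ S|) = min(d, |N(v) ∩ R'|). -/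
/-!
The hypothesis says that every `S ⊆ A` contains at most `k` vertices forming a set
`1`-neighbour equivalent to `S`. Neighbour equivalences add up: if `P ⊆ S` is `d`-neighbour
equivalent to `S` and `R ⊆ S \ P` is `e`-neighbour equivalent to `S \ P`, then `P ∪ R` is
`(d + e)`-neighbour equivalent to `S`. Hence picking representatives `d` times, each time of what
is left of `S`, gives the result.
-/

/-- `DNeighborEquiv G A d X X'` is the `d`-neighbour equivalence `X ≡_A^d X'`. Counting with
`Set.encard` keeps it meaningful when the neighbourhoods are infinite. -/
def DNeighborEquiv {V : Type*} (G : SimpleGraph V) (A : Set V) (d : ℕ∞) (X X' : Set V) : Prop :=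
  ∀ v ∈ Aᶜ, min d (G.neighborSet v ∩ X).encard = min d (G.neighborSet v ∩ X').encard

theorem min_one_eq_min_one_iff {m n : ℕ∞} : min 1 m = min 1 n ↔ (1 ≤ m ↔ 1 ≤ n) := by
  have hm : m < 1 ↔ m = 0 := Order.lt_one_iff
  have hn : n < 1 ↔ n = 0 := Order.lt_one_iff
  grind

theorem min_add_add_eq_of_min_eq {d e p q r : ℕ∞} (hp : min d (p + q) = min d p)
    (hr : min e q = min e r) (hrq : r ≤ q) : min (d + e) (p + q) = min (d + e) (p + r) := by
  rcases le_or_gt d p with hdp | hpd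
  · rcases le_or_gt e r with her | hre
    · rw [min_eq_left (add_le_add hdp (her.trans hrq)), min_eq_left (add_le_add hdp her)]
    · have hqr : q = r := by grind
      rw [hqr]
  · have hpq : p + q = p + 0 := by
      rw [add_zero]
      grind
    have hq : q = 0 := ENat.add_right_injective_of_ne_top hpd.ne_top hpq
    have hr0 : r = 0 := nonpos_iff_eq_zero.1 (hq ▸ hrq)
    rw [hq, hr0]

section

variable {V : Type*} {G : SimpleGraph V} {A : Set V}

theorem nonempty_neighborSet_inter_iff {v : V} {X : Set V} :
    (G.neighborSet v ∩ X).Nonempty ↔ v ∈ nbhds G X :=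
  ⟨fun ⟨x, hvx, hx⟩ => ⟨x, hx, hvx.symm⟩, fun ⟨x, hx, hxv⟩ => ⟨x, hxv.symm, hx⟩⟩

theorem dNeighborEquiv_one_iff {X X' : Set V} :
    DNeighborEquiv G A 1 X X' ↔ nbhds G X ∩ Aᶜ = nbhds G X' ∩ Aᶜ := by
  simp only [DNeighborEquiv, min_one_eq_min_one_iff, Set.one_le_encard_iff_nonempty,
    nonempty_neighborSet_inter_iff, Set.ext_iff, Set.mem_inter_iff, and_congr_left_iff]

theorem DNeighborEquiv.union {d e : ℕ∞} {S P R : Set V} (hP : DNeighborEquiv G A d S P)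
    (hR : DNeighborEquiv G A e (S \ P) R) (hPS : P ⊆ S) (hRS : R ⊆ S \ P) :
    DNeighborEquiv G A (d + e) S (P ∪ R) := by
  intro v hv
  have encard_inter_union {Q : Set V} (hPQ : Disjoint P Q) :
      (G.neighborSet v ∩ (P ∪ Q)).encard =
        (G.neighborSet v ∩ P).encard + (G.neighborSet v ∩ Q).encard := by
    rw [Set.inter_union_distrib_left]
    exact Set.encard_union_eq (hPQ.mono Set.inter_subset_right Set.inter_subset_right)
  have hS := encard_inter_union (Q := S \ P) Set.disjoint_sdiff_right
  rw [Set.union_sdiff_cancel hPS] at hS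
  rw [hS, encard_inter_union (Set.disjoint_sdiff_right.mono_right hRS)]
  exact min_add_add_eq_of_min_eq (hS ▸ hP v hv) (hR v hv)
    (Set.encard_le_encard (Set.inter_subset_inter_right _ hRS))

end

theorem small_representatives_d_neighbour_general {V : Type*} (G : SimpleGraph V) (A : Set V)
    (k : ℕ∞) (d : ℕ)
    (hrep : ∀ S ⊆ A, ∃ R ⊆ S, R.encard ≤ k ∧ nbhds G S ∩ Aᶜ = nbhds G R ∩ Aᶜ) :
    ∀ S ⊆ A, ∃ R' ⊆ S, R'.encard ≤ d * k ∧ DNeighborEquiv G A d S R' := by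
  intro S hS
  induction d with
  | zero => exact ⟨∅, Set.empty_subset S, by simp, fun v _ => by simp⟩
  | succ d ih =>
    obtain ⟨P, hPS, hPcard, hP⟩ := ih
    obtain ⟨R, hRS, hRcard, hR⟩ := hrep (S \ P) (Set.sdiff_subset.trans hS)
    refine ⟨P ∪ R, Set.union_subset hPS (hRS.trans Set.sdiff_subset), ?_, ?_⟩
    · calc (P ∪ R).encard ≤ P.encard + R.encard := Set.encard_union_le P R
        _ ≤ d * k + k := add_le_add hPcard hRcard
        _ = (d + 1 : ℕ) * k := by push_cast; ring
    · rw [Nat.cast_succ]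
      exact hP.union (dNeighborEquiv_one_iff.2 hR) hPS hRS

theorem small_representatives_d_neighbour {V : Type*} [Fintype V] (G : SimpleGraph V)
    (A : Set V) (k d : ℕ) (hk : 1 ≤ k) (hd : 1 ≤ d)
    (hrep : ∀ S ⊆ A, ∃ R ⊆ S, R.ncard ≤ k ∧ nbhds G S ∩ Aᶜ = nbhds G R ∩ Aᶜ) :
    ∀ S ⊆ A, ∃ R' ⊆ S, R'.ncard ≤ d * k ∧
      ∀ v ∈ Aᶜ, min d (G.neighborSet v ∩ S).ncard = min d (G.neighborSet v ∩ R').ncard := by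
  have h := small_representatives_d_neighbour_general G A k d
  simp only [DNeighborEquiv, ← (Set.toFinite _).cast_ncard_eq, ← Nat.mono_cast.map_min] at h
  exact_mod_cast h (mod_cast hrep)
end
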